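/- (Scholz reflection principle) For every squarefree integer d > 1, the 3-torsion subgroups of the class groups of ℚ(√−d) and ℚ(√3d) satisfy |Cl_{ℚ(√−d)}[3]| ≤ 3 · |Cl_{ℚ(√3d)}[3]| and |Cl_{ℚ(√3d)}[3]| ≤ 3 · |Cl_{ℚ(√−d)}[3]|; equivalently, log₃|Cl_{ℚ(√−d)}[3]| and log₃|Cl_{ℚ(√3d)}[3]| differ by at most 1. -/

import Mathlib

open NumberField IntermediateField

/-- The order of the `ℓ`-torsion subgroup of the class group of a number field `K`. -/
noncomputable def clTor (K : Type*) [Field K] (ℓ : ℕ) : ℕ :=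
  Nat.card {c : ClassGroup (𝓞 K) // c ^ ℓ = 1}

/-- The imaginary quadratic field `ℚ(√-d)`, realized inside `ℂ` as `ℚ(i·√d)`. -/
noncomputable def Qneg (d : ℕ) : IntermediateField ℚ ℂ :=
  ℚ⟮(Complex.I * (Real.sqrt d : ℂ) : ℂ)⟯

/-- The real quadratic field `ℚ(√(3d))`, realized inside `ℂ`. -/
noncomputable def Qpos3 (d : ℕ) : IntermediateField ℚ ℂ :=
  ℚ⟮((Real.sqrt (3 * d) : ℝ) : ℂ)⟯

open scoped nonZeroDivisors Pointwise


namespace Scholz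

section GroupTheory

variable {G H : Type*} [CommGroup G] [CommGroup H]

lemma relIdx_map (f : G →* H) (K L : Subgroup G) (hK : f.ker ≤ K) (hKL : K ≤ L) :
    (K.map f).relIndex (L.map f) = K.relIndex L := by
  rw [Subgroup.relIndex_map_map, sup_eq_left.2 hK, sup_eq_left.2 (hK.trans hKL)]

/-- `σ - 1`, written multiplicatively. -/
def dl (σ : G →* G) : G →* G := σ / MonoidHom.id G

/-- `1 + σ + σ²`, written multiplicatively. -/
def nm (σ : G →* G) : G →* G := MonoidHom.id G * σ * σ.comp σ

lemma dl_apply (σ : G →* G) (x : G) : dl σ x = σ x / x := rfl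

lemma nm_apply (σ : G →* G) (x : G) : nm σ x = x * σ x * σ (σ x) := rfl

lemma dl_nm (σ : G →* G) (h3 : ∀ x, σ (σ (σ x)) = x) (x : G) : dl σ (nm σ x) = 1 := by
  rw [nm_apply, dl_apply, map_mul, map_mul, h3]
  rw [div_eq_one]
  rw [mul_assoc, mul_comm x, mul_comm (σ (σ x)), mul_assoc]

lemma nm_dl (σ : G →* G) (h3 : ∀ x, σ (σ (σ x)) = x) (x : G) : nm σ (dl σ x) = 1 := by
  rw [dl_apply, nm_apply]
  simp only [map_div, h3]
  rw [div_eq_mul_inv, div_eq_mul_inv, div_eq_mul_inv, mul_comm (σ x) x⁻¹, mul_assoc x⁻¹,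
    mul_comm (σ (σ x)), mul_inv_cancel_left, mul_comm x, mul_assoc, mul_inv_cancel_left,
    inv_mul_cancel]

/-- cubing -/
def cb (G : Type*) [CommGroup G] : G →* G := powMonoidHom 3

lemma cb_apply (x : G) : cb G x = x ^ 3 := rfl

lemma dl_dl (σ : G →* G) (x : G) (hx : nm σ x = 1) :
    dl σ (dl σ x) = (σ x ^ 3)⁻¹ := by
  have h : σ (σ x) = (x * σ x)⁻¹ := by
    rw [nm_apply] at hx
    exact eq_inv_of_mul_eq_one_right hx
  simp only [dl_apply, map_div, h]
  rw [div_eq_mul_inv, div_eq_mul_inv, div_eq_mul_inv]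
  simp only [mul_inv_rev, inv_inv, pow_succ, pow_zero, one_mul]
  rw [mul_comm (σ x)⁻¹ x⁻¹]
  rw [mul_comm x (σ x)⁻¹]
  simp only [mul_assoc]
  rw [mul_left_comm, mul_comm (σ x)⁻¹ x]
  simp only [mul_right_inj]
  rw [mul_left_comm, inv_mul_cancel_left]

/-- Herbrand quotient computation. -/
theorem herbrand (σ : G →* G) (h3 : ∀ x, σ (σ (σ x)) = x)
    (ht : ∀ x : G, x ^ 3 = 1 → x = 1) (u : ℕ)
    (hE : (cb G).range.index = 3 ^ (3 * u + 2))
    (hB : ((dl σ).ker.map (cb G)).relIndex (dl σ).ker = 3 ^ u) :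
    (dl σ).range.relIndex (nm σ).ker = 3 * (nm σ).range.relIndex (dl σ).ker ∧
      (nm σ).range.relIndex (dl σ).ker ≠ 0 := by
  set A := (nm σ).ker with hA
  set B := (dl σ).ker with hBdef
  have hcbinj : Function.Injective (cb G) := (injective_iff_map_eq_one _).2 ht
  have hcker : (cb G).ker = ⊥ := (MonoidHom.ker_eq_bot_iff _).2 hcbinj
  have hNB : ∀ b ∈ B, nm σ b = b ^ 3 := by
    intro b hb
    have hb' : σ b = b := by
      have := (MonoidHom.mem_ker).1 hb
      rw [dl_apply, div_eq_one] at this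
      exact this
    rw [nm_apply, hb', hb', pow_succ, pow_two]
  have hNE_le_B : (nm σ).range ≤ B := by
    rintro _ ⟨x, rfl⟩
    exact dl_nm σ h3 x
  have hcB_le : B.map (cb G) ≤ (nm σ).range := by
    rintro _ ⟨b, hb, rfl⟩
    exact ⟨b, hNB b hb⟩
  -- [B:NE][NE:B^3] = 3^u
  have e1 : (B.map (cb G)).relIndex (nm σ).range * (nm σ).range.relIndex B = 3 ^ u := by
    rw [Subgroup.relIndex_mul_relIndex _ _ _ hcB_le hNE_le_B, hB]
  have hk0 : (B.map (cb G)).relIndex (nm σ).range ≠ 0 := fun h => by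
    rw [h, zero_mul] at e1; exact pow_ne_zero u (by norm_num) e1.symm
  have hk1 : (nm σ).range.relIndex B ≠ 0 := fun h => by
    rw [h, mul_zero] at e1; exact pow_ne_zero u (by norm_num) e1.symm
  -- q(NE) = 3^u
  have e2 : ((nm σ).range.map (cb G)).relIndex (nm σ).range = 3 ^ u := by
    have h1 : ((nm σ).range.map (cb G)).relIndex (B.map (cb G)) = (nm σ).range.relIndex B :=
      relIdx_map _ _ _ (by rw [hcker]; exact bot_le) hNE_le_B
    have h2 := Subgroup.relIndex_mul_relIndex _ _ _
      (Subgroup.map_mono (f := cb G) hNE_le_B) hcB_le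
    rw [← h2, h1, mul_comm, e1]
  -- q(A)
  have e3 : (A.map (cb G)).relIndex A = 3 ^ (2 * u + 2) := by
    have h1 : (cb G).range.relIndex ((cb G).range ⊔ A) * ((cb G).range ⊔ A).index
        = 3 ^ (3 * u + 2) := by
      rw [Subgroup.relIndex_mul_index le_sup_left, hE]
    have h2 : ((cb G).range ⊔ A).index = 3 ^ u := by
      have := relIdx_map (nm σ) ((cb G).range ⊔ A) ⊤ le_sup_right le_top
      rw [Subgroup.relIndex_top_right] at this
      rw [← this, ← e2, ← MonoidHom.range_eq_map]
      congr 1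
      rw [Subgroup.map_sup, hA, (Subgroup.map_eq_bot_iff _).2 le_rfl, sup_bot_eq]
      ext y
      constructor
      · rintro ⟨_, ⟨z, rfl⟩, rfl⟩
        exact ⟨nm σ z, ⟨z, rfl⟩, by simp [cb_apply]⟩
      · rintro ⟨_, ⟨z, rfl⟩, rfl⟩
        exact ⟨cb G z, ⟨z, rfl⟩, by simp [cb_apply]⟩
    have h3' : (cb G).range.relIndex ((cb G).range ⊔ A) = (A.map (cb G)).relIndex A := by
      rw [Subgroup.relIndex_sup_left, ← Subgroup.inf_relIndex_right]
      congr 1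
      ext y
      constructor
      · rintro ⟨⟨z, rfl⟩, hz⟩
        refine ⟨z, ?_, rfl⟩
        have hz' : nm σ (cb G z) = 1 := hz
        rw [cb_apply, map_pow] at hz'
        exact ht _ hz'
      · rintro ⟨z, hz, rfl⟩
        refine ⟨⟨z, rfl⟩, ?_⟩
        exact pow_mem (show z ∈ A from hz) 3
    rw [h3', h2] at h1
    have h4 : (3:ℕ) ^ (3 * u + 2) = 3 ^ (2 * u + 2) * 3 ^ u := by rw [← pow_add]; congr 1; ring
    rw [h4] at h1
    exact Nat.eq_of_mul_eq_mul_right (by positivity) h1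
  -- [A : δA]
  have hdA : A.map (dl σ) ≤ A := by
    rintro _ ⟨a, -, rfl⟩
    exact nm_dl σ h3 a
  have hdd : (A.map (dl σ)).map (dl σ) = A.map (cb G) := by
    ext y
    constructor
    · rintro ⟨_, ⟨a, ha, rfl⟩, rfl⟩
      refine ⟨(σ a)⁻¹, ?_, ?_⟩
      · have ha' : nm σ a = 1 := ha
        apply inv_mem
        show nm σ (σ a) = 1
        rw [nm_apply, h3, ← ha', nm_apply, mul_comm _ a, mul_assoc]
      · rw [dl_dl σ a ha, cb_apply, inv_pow]
    · rintro ⟨a, ha, rfl⟩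
      have ha' : nm σ a = 1 := ha
      have h5 : nm σ (σ (σ a))⁻¹ = 1 := by
        rw [map_inv, nm_apply, h3, inv_eq_one, ← ha', nm_apply, mul_assoc, mul_comm]
      refine ⟨_, ⟨(σ (σ a))⁻¹, h5, rfl⟩, ?_⟩
      rw [dl_dl σ _ h5, map_inv, h3, cb_apply]
      simp
  have e4 : (A.map (dl σ)).relIndex A = 3 ^ (u + 1) := by
    have h1 : ((A.map (dl σ)).map (dl σ)).relIndex (A.map (dl σ)) = (A.map (dl σ)).relIndex A := by
      have := Subgroup.relIndex_map_map (dl σ) (A.map (dl σ)) A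
      rw [this]
      -- use injectivity on A
      have h6 := Subgroup.relIndex_map_map_of_injective
        (f := (dl σ).comp A.subtype) ((A.map (dl σ)).subgroupOf A) ⊤ (by
          rw [injective_iff_map_eq_one]
          rintro ⟨a, ha⟩ h7
          have h8 : dl σ a = 1 := h7
          have h9 : nm σ a = a ^ 3 := hNB a h8
          have ha' : nm σ a = 1 := ha
          rw [ha'] at h9
          ext
          exact ht a h9.symm)
      rw [← this]
      have h10 : ((A.map (dl σ)).subgroupOf A).map ((dl σ).comp A.subtype) =
          (A.map (dl σ)).map (dl σ) := by
        rw [← Subgroup.map_map, Subgroup.map_subgroupOf_eq_of_le hdA]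
      have h11 : (⊤ : Subgroup A).map ((dl σ).comp A.subtype) = A.map (dl σ) := by
        rw [← Subgroup.map_map, ← MonoidHom.range_eq_map, Subgroup.range_subtype]
      rw [h10, h11] at h6
      rw [h6, Subgroup.relIndex_top_right]
      rfl
    have h2 := Subgroup.relIndex_mul_relIndex _ _ _ (Subgroup.map_mono (f := dl σ) hdA) hdA
    rw [h1, hdd, e3] at h2
    have : (3:ℕ) ^ (2 * u + 2) = 3 ^ (u+1) * 3 ^ (u+1) := by rw [← pow_add]; congr 1; ring
    rw [this] at h2
    exact Nat.mul_self_inj.1 h2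
  -- [δE : δA] = [E : AB] = [NE : B^3]
  have e5 : (A.map (dl σ)).relIndex (dl σ).range = (A ⊔ B).index := by
    have := relIdx_map (dl σ) (A ⊔ B) ⊤ le_sup_right le_top
    rw [Subgroup.relIndex_top_right, ← MonoidHom.range_eq_map, Subgroup.map_sup,
      (Subgroup.map_eq_bot_iff B).2 le_rfl, sup_bot_eq] at this
    exact this
  have e6 : (B.map (cb G)).relIndex (nm σ).range = (A ⊔ B).index := by
    have := relIdx_map (nm σ) (A ⊔ B) ⊤ le_sup_left le_top
    rw [Subgroup.relIndex_top_right, ← MonoidHom.range_eq_map, Subgroup.map_sup,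
      (Subgroup.map_eq_bot_iff A).2 le_rfl, bot_sup_eq] at this
    rw [← this]
    congr 1
    ext y
    constructor
    · rintro ⟨b, hb, rfl⟩
      exact ⟨b, hb, hNB b hb⟩
    · rintro ⟨b, hb, rfl⟩
      exact ⟨b, hb, (hNB b hb).symm⟩
  have hdE : (dl σ).range ≤ A := by
    rintro _ ⟨x, rfl⟩
    exact nm_dl σ h3 x
  have hdA' : A.map (dl σ) ≤ (dl σ).range := by
    rintro _ ⟨a, -, rfl⟩; exact ⟨a, rfl⟩
  have e7 := Subgroup.relIndex_mul_relIndex _ _ _ hdA' hdE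
  rw [e5, e4, ← e6, pow_succ, mul_comm (3 ^ u) 3, ← e1] at e7
  refine ⟨?_, hk1⟩
  apply Nat.eq_of_mul_eq_mul_left (Nat.pos_of_ne_zero hk0)
  rw [e7]; ring

/-- Chevalley's ambiguous class number inequality, abstractly. `A` is the multiplicative group of the
field, `I` the group of fractional ideals, `U` the units. -/
theorem chevalley {A I U : Type*} [CommGroup A] [CommGroup I] [CommGroup U]
    (dv : A →* I) (e : U →* A) (he : Function.Injective e) (hker : dv.ker = e.range)
    (σA : A →* A) (σI : I →* I) (σU : U →* U)
    (hA3 : ∀ x, σA (σA (σA x)) = x) (hI3 : ∀ x, σI (σI (σI x)) = x)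
    (hdv : ∀ x, dv (σA x) = σI (dv x)) (heσ : ∀ x, e (σU x) = σA (e x))
    (h90 : ∀ a, nm σA a = 1 → ∃ b, dl σA b = a)
    (hfin : dv.range.index ≠ 0)
    (hfin0 : ((dl σA).ker.map dv).relIndex (dl σI).ker ≠ 0)
    (hnorm : ∀ x ∈ (dl σI).ker, ∃ y, ∃ a ∈ (dl σA).ker, x = dv a * nm σI y)
    (hUfin : (nm σU).range.relIndex (dl σU).ker ≠ 0) :
    (dl σU).range.relIndex (nm σU).ker ≤ (nm σU).range.relIndex (dl σU).ker := by
  have hdl : ∀ x, dv (dl σA x) = dl σI (dv x) := fun x => by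
    simp only [dl_apply, map_div, hdv]
  have hnm : ∀ x, dv (nm σA x) = nm σI (dv x) := fun x => by
    simp only [nm_apply, map_mul, hdv]
  have hedl : ∀ x, e (dl σU x) = dl σA (e x) := fun x => by
    simp only [dl_apply, map_div, heσ]
  have henm : ∀ x, e (nm σU x) = nm σA (e x) := fun x => by
    simp only [nm_apply, map_mul, heσ]
  have hdve : ∀ u, dv (e u) = 1 := fun u => by
    have : e u ∈ dv.ker := by rw [hker]; exact ⟨u, rfl⟩
    exact this
  set P := dv.range with hP
  set I0 := (dl σI).ker with hI0
  set A0 := (dl σA).ker with hA0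
  set P0 := A0.map dv with hP0
  set T := P.comap (dl σI) with hT
  -- step 1 : [T:P] = [I : δ(I) P]
  have hPT : P ≤ T := by
    rintro _ ⟨a, rfl⟩
    exact ⟨dl σA a, hdl a⟩
  set D := (dl σI).range ⊔ P with hD
  have s1 : P.relIndex T = D.index := by
    have h1 : T.index = P.relIndex D := by
      rw [hD, Subgroup.relIndex_sup_right, hT, Subgroup.index_comap]
    have h2 := Subgroup.relIndex_mul_index hPT
    have h3 := Subgroup.relIndex_mul_index (le_sup_right : P ≤ D)
    rw [h1] at h2
    have h4 : P.relIndex D ≠ 0 := fun h => hfin (by rw [← h3, h, zero_mul])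
    apply Nat.eq_of_mul_eq_mul_left (Nat.pos_of_ne_zero h4)
    rw [h3, ← h2, mul_comm]
  have hDfin : D.index ≠ 0 := fun h => hfin (by
    rw [← Subgroup.relIndex_mul_index (le_sup_right : P ≤ D), h, mul_zero])
  -- step 2 : [I0:P0] ≤ [I:D]
  have hP0I0 : P0 ≤ I0 := by
    rintro _ ⟨a, ha, rfl⟩
    have ha' : dl σA a = 1 := ha
    show dl σI (dv a) = 1
    rw [← hdl, ha', map_one]
  have s2 : P0.relIndex I0 ≤ D.index := by
    -- the preimage of P0 under the norm contains D
    have h1 : D ≤ P0.comap (nm σI) := by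
      rw [hD, sup_le_iff]
      constructor
      · rintro _ ⟨x, rfl⟩
        show nm σI (dl σI x) ∈ P0
        rw [nm_dl σI hI3]; exact one_mem _
      · rintro _ ⟨a, rfl⟩
        show nm σI (dv a) ∈ P0
        rw [← hnm]
        exact ⟨_, dl_nm σA hA3 a, rfl⟩
    have h2 : (P0.comap (nm σI)).index = P0.relIndex I0 := by
      rw [Subgroup.index_comap]
      have h3 : P0 ⊔ (nm σI).range = I0 := by
        apply le_antisymm
        · rw [sup_le_iff]
          refine ⟨hP0I0, ?_⟩
          rintro _ ⟨x, rfl⟩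
          exact dl_nm σI hI3 x
        · intro x hx
          obtain ⟨y, a, ha, rfl⟩ := hnorm x hx
          exact Subgroup.mul_mem_sup ⟨a, ha, rfl⟩ ⟨y, rfl⟩
      rw [← h3, Subgroup.relIndex_sup_left]
    rw [← h2]
    exact Nat.le_of_dvd (Nat.pos_of_ne_zero hDfin) (Subgroup.index_dvd_of_le h1)
  -- step 3
  have hI0T : I0 ≤ T := by
    intro x hx
    have hx' : dl σI x = 1 := hx
    show dl σI x ∈ P
    rw [hx']; exact one_mem _
  have s3 : P.relIndex T = P.relIndex I0 * (I0 ⊔ P).relIndex T := by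
    rw [← Subgroup.relIndex_mul_relIndex _ _ _ (le_sup_right : P ≤ I0 ⊔ P) (sup_le hI0T hPT),
      Subgroup.relIndex_sup_right]
  have hP0P : P0 ≤ I0 ⊓ P := le_inf hP0I0 (by rintro _ ⟨a, -, rfl⟩; exact ⟨a, rfl⟩)
  have s4 : P0.relIndex I0 = P0.relIndex (I0 ⊓ P) * P.relIndex I0 := by
    rw [← Subgroup.relIndex_mul_relIndex _ _ _ hP0P inf_le_left, inf_comm,
      Subgroup.inf_relIndex_right]
  have hPI0 : P.relIndex I0 ≠ 0 := fun h => hfin0 (by rw [s4, h, mul_zero])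
  have s5 : P0.relIndex (I0 ⊓ P) ≤ (I0 ⊔ P).relIndex T := by
    have := s2
    rw [← s1, s3, s4, mul_comm] at this
    exact Nat.le_of_mul_le_mul_left this (Nat.pos_of_ne_zero hPI0)
  -- step 4 : [I0 ∩ P : P0] = [ker N_U : δ U]
  have s6 : P0.relIndex (I0 ⊓ P) = (dl σU).range.relIndex (nm σU).ker := by
    set Bq := I0.comap dv with hBq
    have h1 : Bq.map dv = I0 ⊓ P := by
      rw [hBq, Subgroup.map_comap_eq, inf_comm]
    have h2 : (A0 ⊔ e.range).map dv = P0 := by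
      rw [Subgroup.map_sup, ← hker, (Subgroup.map_eq_bot_iff dv.ker).2 le_rfl, sup_bot_eq]
    have hle : A0 ⊔ e.range ≤ Bq := by
      rw [sup_le_iff]
      constructor
      · intro a ha
        exact hP0I0 ⟨a, ha, rfl⟩
      · rintro _ ⟨u, rfl⟩
        show dv (e u) ∈ I0
        rw [hdve]; exact one_mem _
    have h3 := relIdx_map dv (A0 ⊔ e.range) Bq (by rw [hker]; exact le_sup_right) hle
    rw [h1, h2] at h3
    have h4 := relIdx_map (dl σA) (A0 ⊔ e.range) Bq le_sup_left hle
    rw [h3, ← h4, ← Subgroup.relIndex_map_map_of_injective (f := e) _ _ he]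
    congr 1
    · rw [Subgroup.map_sup, (Subgroup.map_eq_bot_iff A0).2 le_rfl, bot_sup_eq]
      ext y
      constructor
      · rintro ⟨_, ⟨u, rfl⟩, rfl⟩
        exact ⟨dl σU u, ⟨u, rfl⟩, hedl u⟩
      · rintro ⟨_, ⟨u, rfl⟩, rfl⟩
        exact ⟨e u, ⟨u, rfl⟩, (hedl u).symm⟩
    · ext y
      constructor
      · rintro ⟨b, hb, rfl⟩
        have hb' : dl σI (dv b) = 1 := hb
        have : dl σA b ∈ dv.ker := by
          show dv (dl σA b) = 1
          rw [hdl, hb']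
        rw [hker] at this
        obtain ⟨u, hu⟩ := this
        refine ⟨u, ?_, hu⟩
        apply he
        rw [henm, hu, nm_dl σA hA3, map_one]
      · rintro ⟨u, hu, rfl⟩
        have hu' : nm σU u = 1 := hu
        obtain ⟨b, hb⟩ := h90 (e u) (by rw [← henm, hu', map_one])
        refine ⟨b, ?_, hb⟩
        show dl σI (dv b) = 1
        rw [← hdl, hb, hdve]
  -- step 5 : [T : I0 P] ≤ [U0 : N U]
  have s7 : (I0 ⊔ P).relIndex T ≤ (nm σU).range.relIndex (dl σU).ker := by
    set S := (dl σI).range.comap dv with hS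
    have h1 := relIdx_map (dl σI) (I0 ⊔ P) T le_sup_left (sup_le hI0T hPT)
    have h2 : T.map (dl σI) = S.map dv := by
      rw [hT, hS, Subgroup.map_comap_eq, Subgroup.map_comap_eq, inf_comm]
    have h3 : (I0 ⊔ P).map (dl σI) = ((dl σA).range ⊔ e.range).map dv := by
      rw [Subgroup.map_sup, (Subgroup.map_eq_bot_iff I0).2 le_rfl, bot_sup_eq, Subgroup.map_sup,
        ← hker, (Subgroup.map_eq_bot_iff dv.ker).2 le_rfl, sup_bot_eq]
      ext y
      constructor
      · rintro ⟨_, ⟨a, rfl⟩, rfl⟩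
        exact ⟨dl σA a, ⟨a, rfl⟩, hdl a⟩
      · rintro ⟨_, ⟨a, rfl⟩, rfl⟩
        exact ⟨dv a, ⟨a, rfl⟩, (hdl a).symm⟩
    have hle : (dl σA).range ⊔ e.range ≤ S := by
      rw [sup_le_iff]
      constructor
      · rintro _ ⟨a, rfl⟩
        exact ⟨dv a, (hdl a).symm⟩
      · rintro _ ⟨u, rfl⟩
        exact ⟨1, by rw [hdve, map_one]⟩
    have h4 := relIdx_map dv ((dl σA).range ⊔ e.range) S (by rw [hker]; exact le_sup_right) hle
    have hkle : (nm σA).ker ≤ (dl σA).range ⊔ e.range := by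
      intro a ha
      obtain ⟨b, hb⟩ := h90 a ha
      exact Subgroup.mem_sup_left ⟨b, hb⟩
    have h5 := relIdx_map (nm σA) ((dl σA).range ⊔ e.range) S hkle hle
    rw [← h1, h2, h3, h4, ← h5]
    have h6 : ((dl σA).range ⊔ e.range).map (nm σA) = (nm σU).range.map e := by
      rw [Subgroup.map_sup]
      have : (dl σA).range.map (nm σA) = ⊥ := by
        rw [Subgroup.map_eq_bot_iff]
        rintro _ ⟨a, rfl⟩
        exact nm_dl σA hA3 a
      rw [this, bot_sup_eq]
      ext y
      constructor
      · rintro ⟨_, ⟨u, rfl⟩, rfl⟩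
        exact ⟨nm σU u, ⟨u, rfl⟩, henm u⟩
      · rintro ⟨_, ⟨u, rfl⟩, rfl⟩
        exact ⟨e u, ⟨u, rfl⟩, (henm u).symm⟩
    have h7 : S.map (nm σA) ≤ (dl σU).ker.map e := by
      rintro _ ⟨a, ⟨x, hx⟩, rfl⟩
      have : nm σA a ∈ dv.ker := by
        show dv (nm σA a) = 1
        rw [hnm, ← hx, nm_dl σI hI3]
      rw [hker] at this
      obtain ⟨u, hu⟩ := this
      refine ⟨u, ?_, hu⟩
      apply he
      rw [hedl, hu, dl_nm σA hA3, map_one]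
    have h8 := Subgroup.relIndex_map_map_of_injective (f := e) (nm σU).range (dl σU).ker he
    rw [← h8] at hUfin ⊢
    rw [h6]
    exact Subgroup.relIndex_le_of_le_right h7 hUfin
  rw [← s6]
  exact s5.trans s7

end GroupTheory

end Scholz

namespace Scholz
section UnitIndex

lemma cube_index_free (Q : Type*) [CommGroup Q] [Module.Free ℤ (Additive Q)]
    [Module.Finite ℤ (Additive Q)] :
    (cb Q).range.index = 3 ^ Module.finrank ℤ (Additive Q) := by
  rw [← ModN.natCard_eq (G := Additive Q) (n := 3), Subgroup.index]
  refine Nat.card_congr (Equiv.trans (Additive.ofMul : _ ≃ Additive (Q ⧸ (cb Q).range)) ?_)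
  refine Quotient.congr Additive.ofMul ?_
  intro a b
  change (QuotientGroup.leftRel _) a b ↔ (QuotientAddGroup.leftRel _) _ _
  rw [QuotientGroup.leftRel_apply, QuotientAddGroup.leftRel_apply]
  constructor
  · rintro ⟨x, hx⟩
    exact ⟨Additive.ofMul x, by
      rw [cb_apply] at hx
      rw [← ofMul_inv, ← ofMul_mul, ← hx]; simp; exact ofNat_zsmul _ 3⟩
  · rintro ⟨x, hx⟩
    refine ⟨x.toMul, ?_⟩
    rw [← ofMul_inv, ← ofMul_mul] at hx
    have := congrArg Additive.toMul hx
    rw [toMul_ofMul] at this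
    rw [← this]; simp [cb_apply]

lemma unit_no_tors (K : Type*) [Field K] (hζ : ∀ x : K, x ^ 3 = 1 → x = 1)
    (x : (𝓞 K)ˣ) (hx : x ^ 3 = 1) : x = 1 := by
  have h := hζ ((x : 𝓞 K) : K) (by
    have : ((x ^ 3 : (𝓞 K)ˣ) : 𝓞 K) = 1 := by rw [hx]; rfl
    have := congrArg (algebraMap (𝓞 K) K) this
    simpa using this)
  ext
  simpa using h

theorem unit_cube_index (K : Type*) [Field K] [NumberField K] (hζ : ∀ x : K, x ^ 3 = 1 → x = 1) :
    (cb (𝓞 K)ˣ).range.index = 3 ^ (Units.rank K) := by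
  have hT : Units.torsion K ≤ (cb (𝓞 K)ˣ).range := by
    intro x hx
    have hinj : Function.Injective (cb (Units.torsion K)) := by
      rw [injective_iff_map_eq_one]
      intro a ha
      have : (a : (𝓞 K)ˣ) ^ 3 = 1 := by
        have := congrArg Subtype.val ha
        simpa [cb_apply] using this
      ext1
      exact unit_no_tors K hζ _ this
    obtain ⟨y, hy⟩ := Finite.surjective_of_injective hinj ⟨x, hx⟩
    exact ⟨y, by have := congrArg Subtype.val hy; simpa [cb_apply] using this⟩
  have h := relIdx_map (H := (𝓞 K)ˣ ⧸ Units.torsion K) (QuotientGroup.mk' (Units.torsion K)) (cb (𝓞 K)ˣ).range ⊤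
    (by rw [QuotientGroup.ker_mk']; exact hT) le_top
  rw [Subgroup.relIndex_top_right, Subgroup.map_top_of_surjective _ (QuotientGroup.mk'_surjective _),
    Subgroup.relIndex_top_right] at h
  rw [← h, ← Units.finrank_modTorsion, ← cube_index_free]
  congr 1
  ext y
  constructor
  · rintro ⟨_, ⟨x, rfl⟩, rfl⟩
    exact ⟨QuotientGroup.mk' _ x, by simp [cb_apply]⟩
  · rintro ⟨z, rfl⟩
    obtain ⟨x, rfl⟩ := QuotientGroup.mk'_surjective _ z
    exact ⟨cb _ x, ⟨x, rfl⟩, by simp [cb_apply]⟩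

theorem rank_cubic (F M : Type*) [Field F] [Field M] [NumberField F] [NumberField M] [Algebra F M]
    [IsGalois F M] (h3 : Module.finrank F M = 3) :
    Units.rank M = 3 * Units.rank F + 2 := by
  have : IsUnramifiedAtInfinitePlaces F M := 
    IsUnramifiedAtInfinitePlaces_of_odd_finrank (by rw [h3]; decide)
  have h := IsUnramifiedAtInfinitePlaces.card_infinitePlace F M
  have h2 : 0 < Fintype.card (InfinitePlace F) := Fintype.card_pos
  rw [h3] at h
  unfold Units.rank
  omega

end UnitIndex
end Scholz

namespace Scholz
section Ambig
set_option linter.unusedSectionVars false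
variable {F M : Type*} [Field F] [Field M] [NumberField F] [NumberField M] [Algebra F M]
  [IsGalois F M]

lemma smul_eq_map (g : Gal(M/F)) (I : Ideal (𝓞 M)) :
    g • I = I.map (MulSemiringAction.toRingHom Gal(M/F) (𝓞 M) g) := rfl

lemma smul_map_alg (g : Gal(M/F)) (I : Ideal (𝓞 F)) :
    g • (I.map (algebraMap (𝓞 F) (𝓞 M))) = I.map (algebraMap (𝓞 F) (𝓞 M)) := by
  rw [smul_eq_map, Ideal.map_map]
  congr 1
  ext x
  simp [MulSemiringAction.toRingHom_apply, smul_algebraMap]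

lemma ideal_smul_mul (g : Gal(M/F)) (I J : Ideal (𝓞 M)) : g • (I * J) = g • I * g • J := by
  rw [smul_eq_map, smul_eq_map, smul_eq_map, Ideal.map_mul]

lemma map_prime_eq_prod (hram : ∀ P : Ideal (𝓞 M), P ≠ ⊥ → P.IsPrime → P.ramificationIdx (𝓞 F) = 1)
    (p : Ideal (𝓞 F)) (hp : p ≠ ⊥) [p.IsMaximal] :
    p.map (algebraMap (𝓞 F) (𝓞 M)) = ∏ P ∈ p.primesOver (𝓞 M), P := by
  rw [Ideal.map_algebraMap_eq_finsetProd_pow hp]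
  apply Finset.prod_congr rfl
  intro P hP
  rw [Set.mem_toFinset] at hP
  have hP1 := hP.1
  have hP2 : P.LiesOver p := hP.2
  rw [hram P (Ideal.ne_bot_of_liesOver_of_ne_bot hp P) hP1, pow_one]

lemma ambig_integral
    (hram : ∀ P : Ideal (𝓞 M), P ≠ ⊥ → P.IsPrime → P.ramificationIdx (𝓞 F) = 1)
    (J : Ideal (𝓞 M)) (hJ : J ≠ ⊥) (hinv : ∀ g : Gal(M/F), g • J = J) :
    ∃ I : Ideal (𝓞 F), J = I.map (algebraMap (𝓞 F) (𝓞 M)) := by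
  induction J using (wellFounded_dvdNotUnit (α := Ideal (𝓞 M))).induction with
  | _ J ih =>
  by_cases hJ1 : J = ⊤
  · exact ⟨⊤, by rw [hJ1, Ideal.map_top]⟩
  obtain ⟨P, hPmax, hPJ⟩ := Ideal.exists_le_maximal J hJ1
  have hPprime := hPmax.isPrime
  have hPbot : P ≠ ⊥ := fun h => hJ (le_bot_iff.1 (h ▸ hPJ))
  set p := P.under (𝓞 F) with hp
  have hpbot : p ≠ ⊥ := Ideal.under_ne_bot (𝓞 F) hPbot
  have hpp : p.IsPrime := inferInstance
  have hpm : p.IsMaximal := hpp.isMaximal hpbot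
  have hprod := map_prime_eq_prod hram p hpbot
  have hdvd : p.map (algebraMap (𝓞 F) (𝓞 M)) ∣ J := by
    rw [hprod]
    apply Finset.prod_dvd_of_isRelPrime
    · intro Q hQ Q' hQ' hne
      rw [Finset.mem_coe, Set.mem_toFinset] at hQ hQ'
      have hQ1 := hQ.1
      have hQ2 : Q.LiesOver p := hQ.2
      have hQ'1 := hQ'.1
      have hQ'2 : Q'.LiesOver p := hQ'.2
      have m1 := hQ1.isMaximal (Ideal.ne_bot_of_liesOver_of_ne_bot hpbot Q)
      have m2 := hQ'1.isMaximal (Ideal.ne_bot_of_liesOver_of_ne_bot hpbot Q')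
      exact (Ideal.isCoprime_of_isMaximal hne).isRelPrime
    · intro Q hQ
      rw [Set.mem_toFinset] at hQ
      have hQ1 := hQ.1
      have hQ2 : Q.LiesOver p := hQ.2
      obtain ⟨g, hg⟩ := Ideal.exists_smul_eq_of_isGaloisGroup p P Q Gal(M/F)
      rw [Ideal.dvd_iff_le, ← hg, ← hinv g]
      exact Ideal.pointwise_smul_le_pointwise_smul_iff.2 hPJ
  obtain ⟨J', hJ'⟩ := hdvd
  have hJ'bot : J' ≠ ⊥ := by
    rintro rfl
    rw [Ideal.mul_bot] at hJ'
    exact hJ hJ'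
  have hmapbot : p.map (algebraMap (𝓞 F) (𝓞 M)) ≠ ⊥ := by
    intro h
    rw [h, Ideal.bot_mul] at hJ'
    exact hJ hJ'
  obtain ⟨I, hI⟩ := ih J' ⟨hJ'bot, p.map (algebraMap (𝓞 F) (𝓞 M)), by
      intro h
      rw [Ideal.isUnit_iff] at h
      have h2 : p.map (algebraMap (𝓞 F) (𝓞 M)) ≤ P := Ideal.map_le_iff_le_comap.2 le_rfl
      rw [h, top_le_iff] at h2
      exact hPprime.ne_top h2, by rw [hJ', mul_comm]⟩ hJ'bot (by
      intro g
      have := hinv g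
      rw [hJ', ideal_smul_mul, smul_map_alg] at this
      exact mul_left_cancel₀ hmapbot this)
  exact ⟨p * I, by rw [Ideal.map_mul, ← hI, hJ']⟩

/-- A totally split prime is the norm of an ideal upstairs. -/
lemma split_prime (σ : Gal(M/F)) (h3 : σ ^ 3 = 1) (hσ : ∀ x, x ∈ Subgroup.zpowers σ)
    (hcard : Nat.card Gal(M/F) = 3)
    (hram : ∀ P : Ideal (𝓞 M), P ≠ ⊥ → P.IsPrime → P.ramificationIdx (𝓞 F) = 1)
    (p : Ideal (𝓞 F)) (hp : p ≠ ⊥) [p.IsMaximal] (hspl : (p.primesOver (𝓞 M)).ncard = 3) :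
    ∃ P : Ideal (𝓞 M), P ≠ ⊥ ∧
      p.map (algebraMap (𝓞 F) (𝓞 M)) = P * σ • P * σ • σ • P := by
  classical
  rw [map_prime_eq_prod hram p hp]
  have hne : (p.primesOver (𝓞 M)).Nonempty := by
    rw [Set.nonempty_iff_ne_empty]; rintro h; simp [h] at hspl
  obtain ⟨P, hP⟩ := hne
  have hP1 := hP.1
  have hP2 : P.LiesOver p := hP.2
  refine ⟨P, Ideal.ne_bot_of_liesOver_of_ne_bot hp P, ?_⟩
  have hsub : (p.primesOver (𝓞 M)).toFinset ⊆ {P, σ • P, σ • σ • P} := by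
    intro Q hQ
    rw [Set.mem_toFinset] at hQ
    have hQ1 := hQ.1
    have hQ2 : Q.LiesOver p := hQ.2
    obtain ⟨g, hg⟩ := Ideal.exists_smul_eq_of_isGaloisGroup p P Q Gal(M/F)
    obtain ⟨n, hn⟩ := hσ g
    have hn' : σ ^ n = g := hn
    have h4 : σ ^ (3:ℤ) = 1 := by exact_mod_cast h3
    rw [← Int.emod_add_mul_ediv n 3, zpow_add, zpow_mul, h4, one_zpow, mul_one] at hn'
    have h5 : n % 3 = 0 ∨ n % 3 = 1 ∨ n % 3 = 2 := by omega
    simp only [Finset.mem_insert, Finset.mem_singleton]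
    rcases h5 with h | h | h
    · left; rw [← hg, ← hn', h]; simp
    · right; left; rw [← hg, ← hn', h]; simp
    · right; right; rw [← hg, ← hn', h, smul_smul, zpow_ofNat, pow_two]
  rw [Set.ncard_eq_toFinset_card'] at hspl
  have hle := Finset.card_le_three (a := P) (b := σ • P) (c := σ • σ • P)
  have heq := Finset.eq_of_subset_of_card_le hsub (by rw [hspl]; exact hle)
  have hc3 : ({P, σ • P, σ • σ • P} : Finset (Ideal (𝓞 M))).card = 3 := by rw [← heq, hspl]
  have hd := Finset.card_eq_three.1 hc3
  have hneq : P ≠ σ • P ∧ P ≠ σ • σ • P ∧ σ • P ≠ σ • σ • P := by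
    refine ⟨?_, ?_, ?_⟩ <;> intro h
    · rw [← h, ← h] at hc3; simp at hc3
    · rw [← h] at hc3
      have : ({P, σ • P, P} : Finset (Ideal (𝓞 M))) = {P, σ • P} := by ext; simp; tauto
      rw [this] at hc3
      have := Finset.card_le_two (a := P) (b := σ • P); omega
    · rw [← h] at hc3
      have : ({P, σ • P, σ • P} : Finset (Ideal (𝓞 M))) = {P, σ • P} := by ext; simp
      rw [this] at hc3
      have := Finset.card_le_two (a := P) (b := σ • P); omega
  rw [heq, Finset.prod_insert, Finset.prod_insert, Finset.prod_singleton, mul_assoc]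
  · simpa using hneq.2.2
  · simp only [Finset.mem_insert, Finset.mem_singleton]; tauto

end Ambig
end Scholz

namespace Scholz
section FracAct
set_option linter.unusedSectionVars false
variable {F M : Type*} [Field F] [Field M] [NumberField F] [NumberField M] [Algebra F M]
  [IsGalois F M]

lemma galHom_le (g : Gal(M/F)) : (𝓞 M)⁰ ≤ (𝓞 M)⁰.comap
    (MulSemiringAction.toRingHom Gal(M/F) (𝓞 M) g) :=
  nonZeroDivisors_le_comap_nonZeroDivisors_of_injective _ (MulAction.injective g)

/-- Galois action on fractional ideals -/
noncomputable def galI (g : Gal(M/F)) : FractionalIdeal (𝓞 M)⁰ M →+* FractionalIdeal (𝓞 M)⁰ M :=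
  FractionalIdeal.extendedHom' M (galHom_le g)

/-- extension of fractional ideals -/
noncomputable def exI (F M : Type*) [Field F] [Field M] [NumberField F] [NumberField M]
    [Algebra F M] : FractionalIdeal (𝓞 F)⁰ F →+* FractionalIdeal (𝓞 M)⁰ M :=
  FractionalIdeal.extendedHom M (𝓞 M)

lemma galI_coe (g : Gal(M/F)) (J : Ideal (𝓞 M)) :
    galI g (J : FractionalIdeal (𝓞 M)⁰ M) = ((g • J : Ideal (𝓞 M)) : FractionalIdeal (𝓞 M)⁰ M) :=
  FractionalIdeal.extended_coeIdeal_eq_map M (galHom_le g) J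

lemma galI_span (g : Gal(M/F)) (x : M) :
    galI g (FractionalIdeal.spanSingleton (𝓞 M)⁰ x) = FractionalIdeal.spanSingleton (𝓞 M)⁰ (g x) := by
  refine (FractionalIdeal.extended_spanSingleton M (galHom_le g) x).trans ?_
  congr 1
  have : IsLocalization.map M (MulSemiringAction.toRingHom Gal(M/F) (𝓞 M) g) (galHom_le g) =
      (g : M →+* M) := by
    refine IsLocalization.ringHom_ext (𝓞 M)⁰ ?_
    rw [IsLocalization.map_comp]
    ext x
    rfl
  rw [this]; rfl

lemma exI_coe (J : Ideal (𝓞 F)) :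
    exI F M (J : FractionalIdeal (𝓞 F)⁰ F) =
      ((J.map (algebraMap (𝓞 F) (𝓞 M)) : Ideal (𝓞 M)) : FractionalIdeal (𝓞 M)⁰ M) :=
  FractionalIdeal.extendedHom_coeIdeal_eq_map M (𝓞 M) J

lemma exI_span (x : F) :
    exI F M (FractionalIdeal.spanSingleton (𝓞 F)⁰ x) =
      FractionalIdeal.spanSingleton (𝓞 M)⁰ (algebraMap F M x) := by
  refine (FractionalIdeal.extendedHom_spanSingleton M (𝓞 M) x).trans ?_
  congr 1
  have : IsFractionRing.map (K := F) (L := M) (FaithfulSMul.algebraMap_injective (𝓞 F) (𝓞 M)) =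
      algebraMap F M := by
    refine IsLocalization.ringHom_ext (𝓞 F)⁰ ?_
    rw [IsFractionRing.map, IsLocalization.map_comp]
    ext x
    rfl
  rw [this]

lemma galI_galI (g h : Gal(M/F)) (x : FractionalIdeal (𝓞 M)⁰ M) :
    galI g (galI h x) = galI (g * h) x := by
  obtain ⟨a, J, -, rfl⟩ := FractionalIdeal.exists_eq_spanSingleton_mul x
  simp only [map_mul, galI_coe, galI_span]
  rw [mul_smul]; rfl

lemma galI_one (x : FractionalIdeal (𝓞 M)⁰ M) : galI (1 : Gal(M/F)) x = x := by
  obtain ⟨a, J, -, rfl⟩ := FractionalIdeal.exists_eq_spanSingleton_mul x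
  simp only [map_mul, galI_coe, galI_span]
  rw [one_smul]; rfl

lemma galI_exI (g : Gal(M/F)) (x : FractionalIdeal (𝓞 F)⁰ F) :
    galI g (exI F M x) = exI F M x := by
  obtain ⟨a, J, -, rfl⟩ := FractionalIdeal.exists_eq_spanSingleton_mul x
  simp only [map_mul, galI_coe, galI_span, exI_coe, exI_span]
  rw [smul_map_alg]; simp

/-- ambiguous ideals come from below -/
lemma ambig_frac
    (hram : ∀ P : Ideal (𝓞 M), P ≠ ⊥ → P.IsPrime → P.ramificationIdx (𝓞 F) = 1)
    (x : FractionalIdeal (𝓞 M)⁰ M) (hx0 : x ≠ 0) (hx : ∀ g : Gal(M/F), galI g x = x) :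
    ∃ y, exI F M y = x := by
  obtain ⟨a, J, ha, hJ⟩ := FractionalIdeal.exists_eq_spanSingleton_mul x
  -- multiply by norm
  have hN : algebraMap (𝓞 F) (𝓞 M) (Algebra.intNorm (𝓞 F) (𝓞 M) a) ∈ Ideal.span {a} := by
    have := Ideal.relNorm_le_comap (𝓞 F) (Ideal.span {a})
    rw [Ideal.relNorm_singleton] at this
    exact this (Ideal.mem_span_singleton_self _)
  obtain ⟨b, hb⟩ := Ideal.mem_span_singleton.1 hN
  set n := Algebra.intNorm (𝓞 F) (𝓞 M) a with hn
  have hn0 : n ≠ 0 := Algebra.intNorm_ne_zero.2 ha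
  have hn0' : algebraMap F M (algebraMap (𝓞 F) F n) ≠ 0 := by simpa using hn0
  have haM : algebraMap (𝓞 M) M a ≠ 0 := by simpa using ha
  have e1 : algebraMap F M (algebraMap (𝓞 F) F n) = algebraMap (𝓞 M) M a * algebraMap (𝓞 M) M b := by
    rw [← map_mul, ← hb]; rfl
  have h1 : exI F M (FractionalIdeal.spanSingleton _ (algebraMap (𝓞 F) F n)) * x =
      ((Ideal.span {b} * J : Ideal (𝓞 M)) : FractionalIdeal (𝓞 M)⁰ M) := by
    rw [exI_span, hJ, FractionalIdeal.coeIdeal_mul, FractionalIdeal.coeIdeal_span_singleton, ← mul_assoc,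
      FractionalIdeal.spanSingleton_mul_spanSingleton, e1]
    congr 2
    field_simp
  have hnx : exI F M (FractionalIdeal.spanSingleton _ (algebraMap (𝓞 F) F n)) ≠ 0 := by
    rw [exI_span, Ne, FractionalIdeal.spanSingleton_eq_zero_iff]; exact hn0'
  obtain ⟨I, hI⟩ := ambig_integral (F := F) hram (Ideal.span {b} * J) (by
    intro h
    rw [h, FractionalIdeal.coeIdeal_bot] at h1
    exact mul_ne_zero hnx hx0 h1) (by
    intro g
    apply FractionalIdeal.coeIdeal_injective (K := M)
    beta_reduce
    rw [← galI_coe, ← h1, map_mul, hx, galI_exI])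
  refine ⟨FractionalIdeal.spanSingleton _ (algebraMap (𝓞 F) F n)⁻¹ * (I : FractionalIdeal (𝓞 F)⁰ F), ?_⟩
  apply mul_left_cancel₀ hnx
  rw [h1, hI, map_mul, exI_coe, ← mul_assoc, ← map_mul, FractionalIdeal.spanSingleton_mul_spanSingleton,
    mul_inv_cancel₀ (by simpa using hn0)]
  simp

lemma princ_index (K : Type*) [Field K] [NumberField K] :
    (toPrincipalIdeal (𝓞 K) K).range.index ≠ 0 := by
  have : Finite ((FractionalIdeal (𝓞 K)⁰ K)ˣ ⧸ (toPrincipalIdeal (𝓞 K) K).range) :=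
    Finite.of_equiv _ (ClassGroup.equiv K).toEquiv
  rw [Subgroup.index]
  exact Nat.card_pos.ne'

lemma princ_ker (K : Type*) [Field K] [NumberField K] :
    (toPrincipalIdeal (𝓞 K) K).ker = (Units.map (algebraMap (𝓞 K) K).toMonoidHom).range := by
  ext x
  rw [MonoidHom.mem_ker, toPrincipalIdeal_eq_iff, Units.val_one]
  constructor
  · intro h
    have hx : (x : K) ∈ FractionalIdeal.spanSingleton (𝓞 K)⁰ (x:K) :=
      FractionalIdeal.mem_spanSingleton_self _ _
    rw [h, FractionalIdeal.mem_one_iff] at hx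
    obtain ⟨a, ha⟩ := hx
    have h' : FractionalIdeal.spanSingleton (𝓞 K)⁰ ((x⁻¹ : Kˣ):K) = 1 := by
      have : FractionalIdeal.spanSingleton (𝓞 K)⁰ (x:K) *
        FractionalIdeal.spanSingleton (𝓞 K)⁰ ((x⁻¹ : Kˣ):K) = 1 := by
          rw [FractionalIdeal.spanSingleton_mul_spanSingleton]; simp
      rwa [h, one_mul] at this
    have hx' : ((x⁻¹ : Kˣ) : K) ∈ FractionalIdeal.spanSingleton (𝓞 K)⁰ ((x⁻¹ : Kˣ):K) :=
      FractionalIdeal.mem_spanSingleton_self _ _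
    rw [h', FractionalIdeal.mem_one_iff] at hx'
    obtain ⟨b, hb⟩ := hx'
    have hab : a * b = 1 := by
      apply FaithfulSMul.algebraMap_injective (𝓞 K) K
      rw [map_mul, ha, hb]; simp
    refine ⟨⟨a, b, hab, by rw [mul_comm, hab]⟩, ?_⟩
    ext
    exact ha
  · rintro ⟨u, rfl⟩
    have := FractionalIdeal.coeIdeal_span_singleton (S := (𝓞 K)⁰) (P := K) (u : 𝓞 K)
    rw [Ideal.span_singleton_eq_top.2 u.isUnit] at this
    simpa using this.symm

end FracAct
end Scholz

namespace Scholz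
section Cubic
set_option linter.unusedSectionVars false
variable {F M : Type} [Field F] [Field M] [NumberField F] [NumberField M] [Algebra F M]
  [IsGalois F M]

lemma fixed_of_gen (σ : Gal(M/F)) (hσ : ∀ x, x ∈ Subgroup.zpowers σ) {X : Type*}
    [MulAction Gal(M/F) X] (x : X) (hx : σ • x = x) (g : Gal(M/F)) : g • x = x := by
  have : Subgroup.zpowers σ ≤ MulAction.stabilizer Gal(M/F) x := by
    rw [Subgroup.zpowers_le]; exact hx
  exact this (hσ g)

/-- Galois on units of the field -/
noncomputable def galA (g : Gal(M/F)) : Mˣ →* Mˣ := Units.map (g : M →* M)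
/-- Galois on units of the ring of integers -/
noncomputable def galU (g : Gal(M/F)) : (𝓞 M)ˣ →* (𝓞 M)ˣ :=
  Units.map (MulSemiringAction.toRingHom Gal(M/F) (𝓞 M) g : 𝓞 M →* 𝓞 M)
/-- Galois on invertible fractional ideals -/
noncomputable def galJ (g : Gal(M/F)) : (FractionalIdeal (𝓞 M)⁰ M)ˣ →* (FractionalIdeal (𝓞 M)⁰ M)ˣ :=
  Units.map (galI g : FractionalIdeal (𝓞 M)⁰ M →* FractionalIdeal (𝓞 M)⁰ M)

lemma galA_val (g : Gal(M/F)) (x : Mˣ) : (galA g x : M) = g x := rfl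
lemma galU_val (g : Gal(M/F)) (x : (𝓞 M)ˣ) : (galU g x : 𝓞 M) = g • (x : 𝓞 M) := rfl
lemma galJ_val (g : Gal(M/F)) (x : (FractionalIdeal (𝓞 M)⁰ M)ˣ) :
  (galJ g x : FractionalIdeal (𝓞 M)⁰ M) = galI g x := rfl

lemma mem_ker_dl {G : Type*} [CommGroup G] (s : G →* G) (x : G) : x ∈ (dl s).ker ↔ s x = x := by
  rw [MonoidHom.mem_ker, dl_apply, div_eq_one]

lemma units_fixed (σ : Gal(M/F)) (hσ : ∀ x, x ∈ Subgroup.zpowers σ) :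
    (dl (galU σ)).ker = (Units.map (algebraMap (𝓞 F) (𝓞 M)).toMonoidHom).range := by
  ext u
  rw [mem_ker_dl]
  constructor
  · intro hu
    have key : ∀ v : (𝓞 M)ˣ, galU σ v = v → ∃ a, algebraMap (𝓞 F) (𝓞 M) a = v := by
      intro v hv
      have h1 : σ • (v : 𝓞 M) = v := by rw [← galU_val, hv]
      exact Algebra.IsInvariant.isInvariant (A := 𝓞 F) (G := Gal(M/F)) (v : 𝓞 M)
        (fixed_of_gen σ hσ _ h1)
    obtain ⟨a, ha⟩ := key u hu
    obtain ⟨b, hb⟩ := key u⁻¹ (by rw [map_inv, hu])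
    have hab : a * b = 1 := by
      apply FaithfulSMul.algebraMap_injective (𝓞 F) (𝓞 M)
      rw [map_mul, ha, hb]; simp
    exact ⟨⟨a, b, hab, by rw [mul_comm, hab]⟩, by ext1; exact ha⟩
  · rintro ⟨v, rfl⟩
    ext1
    rw [galU_val]
    exact smul_algebraMap σ (v : 𝓞 F)

lemma h90 (σ : Gal(M/F)) (hσ : ∀ x, x ∈ Subgroup.zpowers σ) (h3 : Nat.card Gal(M/F) = 3)
    (a : Mˣ) (ha : nm (galA σ) a = 1) : ∃ b, dl (galA σ) b = a := by
  classical
  have : IsCyclic Gal(M/F) := ⟨σ, hσ⟩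
  have hnorm : Algebra.norm F (a : M) = 1 := by
    apply (algebraMap F M).injective
    rw [Algebra.norm_eq_prod_automorphisms, map_one]
    have hinj : Set.InjOn (fun i => σ ^ i) (Finset.range (Nat.card Gal(M/F))) := by
      rw [← orderOf_eq_card_of_forall_mem_zpowers hσ]
      intro i hi j hj hij
      simp only [Finset.coe_range, Set.mem_Iio] at hi hj
      exact pow_injOn_Iio_orderOf hi hj hij
    rw [← IsCyclic.image_range_card hσ, Finset.prod_image hinj, h3]
    have h2 := congrArg Units.val ha
    simp only [nm_apply, Units.val_mul, galA_val] at h2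
    simp only [Finset.prod_range_succ, Finset.prod_range_zero, one_mul, pow_zero, pow_one]
    exact h2
  obtain ⟨y, hy⟩ := groupCohomology.exists_div_of_norm_eq_one hσ hnorm
  refine ⟨y⁻¹, ?_⟩
  ext
  rw [dl_apply, map_inv, ← hy]
  simp [galA_val]
  rw [mul_comm, div_eq_mul_inv]

theorem no_unram_cubic (h3 : Module.finrank F M = 3) (hζ : ∀ x : M, x ^ 3 = 1 → x = 1)
    (hram : ∀ P : Ideal (𝓞 M), P ≠ ⊥ → P.IsPrime → P.ramificationIdx (𝓞 F) = 1)
    (hgen : Subgroup.closure {c : ClassGroup (𝓞 F) | ∃ p : (Ideal (𝓞 F))⁰, p.1.IsPrime ∧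
      (p.1.primesOver (𝓞 M)).ncard = 3 ∧ ClassGroup.mk0 p = c} ⊔ (cb (ClassGroup (𝓞 F))).range = ⊤) :
    False := by
  have hcard : Nat.card Gal(M/F) = 3 := by rw [IsGalois.card_aut_eq_finrank, h3]
  have : Fact (Nat.Prime 3) := ⟨Nat.prime_three⟩
  have hcyc : IsCyclic Gal(M/F) := isCyclic_of_prime_card hcard
  obtain ⟨σ, hσ⟩ := hcyc.exists_generator
  have hσ3 : σ ^ 3 = 1 := by rw [← hcard]; exact pow_card_eq_one'
  have hσσσ : σ * (σ * σ) = 1 := by rw [← hσ3, pow_succ, pow_two, mul_assoc]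
  have hA3 : ∀ x : Mˣ, galA σ (galA σ (galA σ x)) = x := by
    intro x; ext
    simp only [galA_val]
    exact congrArg (fun g : Gal(M/F) => g (x : M)) hσσσ
  have hU3 : ∀ x : (𝓞 M)ˣ, galU σ (galU σ (galU σ x)) = x := by
    intro x; ext1
    simp only [galU_val]
    rw [smul_smul, smul_smul, mul_assoc, hσσσ, one_smul]
  have hI3 : ∀ x, galJ σ (galJ σ (galJ σ x)) = x := by
    intro x; ext1
    simp only [galJ_val, galI_galI, hσσσ, galI_one]
  -- Herbrand
  let eF : (𝓞 F)ˣ →* (𝓞 M)ˣ := Units.map (algebraMap (𝓞 F) (𝓞 M)).toMonoidHom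
  have heF : Function.Injective eF :=
    Units.map_injective (FaithfulSMul.algebraMap_injective (𝓞 F) (𝓞 M))
  have hζF : ∀ x : F, x ^ 3 = 1 → x = 1 := by
    intro x hx
    apply (algebraMap F M).injective
    rw [map_one]
    exact hζ _ (by rw [← map_pow, hx, map_one])
  have hB : ((dl (galU σ)).ker.map (cb _)).relIndex (dl (galU σ)).ker = 3 ^ (Units.rank F) := by
    rw [units_fixed σ hσ, ← unit_cube_index F hζF]
    have := Subgroup.relIndex_map_map_of_injective (f := eF) (cb (𝓞 F)ˣ).range ⊤ heF
    rw [Subgroup.relIndex_top_right] at this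
    rw [← this, ← MonoidHom.range_eq_map]
    congr 1
    ext y
    constructor
    · rintro ⟨_, ⟨x, rfl⟩, rfl⟩
      exact ⟨cb _ x, ⟨x, rfl⟩, by simp only [cb_apply, map_pow]; rfl⟩
    · rintro ⟨_, ⟨x, rfl⟩, rfl⟩
      exact ⟨eF x, ⟨x, rfl⟩, by simp only [cb_apply, map_pow]⟩
  have hherb := herbrand (galU σ) hU3 (unit_no_tors M hζ) (Units.rank F)
    (by rw [unit_cube_index M hζ, rank_cubic F M h3]) hB
  -- Chevalley
  let Ψ : (FractionalIdeal (𝓞 F)⁰ F)ˣ →* (FractionalIdeal (𝓞 M)⁰ M)ˣ :=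
    Units.map (exI F M : FractionalIdeal (𝓞 F)⁰ F →* FractionalIdeal (𝓞 M)⁰ M)
  have hΨval : ∀ z, (Ψ z : FractionalIdeal (𝓞 M)⁰ M) = exI F M z := fun _ => rfl
  have hI0 : (dl (galJ σ)).ker = Ψ.range := by
    ext x
    rw [mem_ker_dl]
    constructor
    · intro hx
      have hx' : galI σ (x : FractionalIdeal (𝓞 M)⁰ M) = x := by rw [← galJ_val, hx]
      have hall : ∀ g : Gal(M/F), galI g (x : FractionalIdeal (𝓞 M)⁰ M) = x := by
        letI : MulAction Gal(M/F) (FractionalIdeal (𝓞 M)⁰ M) :=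
          { smul := fun g x => galI g x
            one_smul := galI_one
            mul_smul := fun g h x => (galI_galI g h x).symm }
        exact fixed_of_gen σ hσ (x : FractionalIdeal (𝓞 M)⁰ M) hx'
      obtain ⟨y, hy⟩ := ambig_frac hram _ x.ne_zero hall
      have hy0 : y ≠ 0 := by rintro rfl; rw [map_zero] at hy; exact x.ne_zero hy.symm
      exact ⟨Units.mk0 y hy0, by ext1; exact hy⟩
    · rintro ⟨z, rfl⟩
      ext1
      rw [galJ_val, hΨval, galI_exI]
  set P0 := (dl (galA σ)).ker.map (toPrincipalIdeal (𝓞 M) M) with hP0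
  have hprinc : ∀ f : Fˣ, Ψ (toPrincipalIdeal (𝓞 F) F f) ∈ P0 := by
    intro f
    refine ⟨Units.map (algebraMap F M).toMonoidHom f, ?_, ?_⟩
    · rw [SetLike.mem_coe, mem_ker_dl]
      ext1
      rw [galA_val]
      exact σ.commutes f
    · ext1
      rw [hΨval, coe_toPrincipalIdeal, coe_toPrincipalIdeal, exI_span]; rfl
  set H := (P0 ⊔ (nm (galJ σ)).range).comap Ψ with hH
  have hHprinc : (toPrincipalIdeal (𝓞 F) F).range ≤ H := by
    rintro _ ⟨f, rfl⟩
    exact Subgroup.mem_sup_left (hprinc f)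
  have hker : (ClassGroup.mk F : (FractionalIdeal (𝓞 F)⁰ F)ˣ →* ClassGroup (𝓞 F)).ker ≤ H := by
    intro z hz
    apply hHprinc
    rw [MonoidHom.mem_ker, ClassGroup.mk_eq_one_iff, FractionalIdeal.isPrincipal_iff] at hz
    obtain ⟨x, hx⟩ := hz
    rw [mem_principal_ideals_iff]
    exact ⟨x, hx.symm⟩
  have hsurj : Function.Surjective (ClassGroup.mk F : (FractionalIdeal (𝓞 F)⁰ F)ˣ →* ClassGroup (𝓞 F)) := by
    intro c
    obtain ⟨I, rfl⟩ := ClassGroup.mk0_surjective c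
    exact ⟨_, ClassGroup.mk_mk0 F I⟩
  have hHtop : H = ⊤ := by
    have h1 : H.map (ClassGroup.mk F : (FractionalIdeal (𝓞 F)⁰ F)ˣ →* ClassGroup (𝓞 F)) = ⊤ := by
      rw [eq_top_iff, ← hgen, sup_le_iff, Subgroup.closure_le]
      constructor
      · rintro _ ⟨p, hp, hspl, rfl⟩
        refine ⟨FractionalIdeal.mk0 F p, ?_, ClassGroup.mk_mk0 F p⟩
        have hp0 : p.1 ≠ ⊥ := nonZeroDivisors.coe_ne_zero p
        have hpm : p.1.IsMaximal := hp.isMaximal hp0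
        obtain ⟨P, hP0, hP⟩ := split_prime σ hσ3 hσ hcard hram p.1 hp0 hspl
        apply Subgroup.mem_sup_right
        refine ⟨Units.mk0 (P : FractionalIdeal (𝓞 M)⁰ M) (FractionalIdeal.coeIdeal_ne_zero.2 hP0), ?_⟩
        ext1
        rw [hΨval, FractionalIdeal.coe_mk0, exI_coe, hP, nm_apply]
        simp only [Units.val_mul, galJ_val, Units.val_mk0, galI_coe, FractionalIdeal.coeIdeal_mul]
      · rintro _ ⟨c, rfl⟩
        obtain ⟨z, rfl⟩ := hsurj c
        refine ⟨z ^ 3, ?_, by rw [map_pow, cb_apply]⟩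
        apply Subgroup.mem_sup_right
        refine ⟨Ψ z, ?_⟩
        have : galJ σ (Ψ z) = Ψ z := by
          rw [← mem_ker_dl, hI0]; exact ⟨z, rfl⟩
        rw [nm_apply, this, this, map_pow, pow_succ, pow_two]
    have h2 := Subgroup.comap_map_eq (ClassGroup.mk F : (FractionalIdeal (𝓞 F)⁰ F)ˣ →* ClassGroup (𝓞 F)) H
    rw [h1, sup_eq_left.2 hker, Subgroup.comap_top] at h2
    exact h2.symm
  have hfin0 : P0.relIndex (dl (galJ σ)).ker ≠ 0 := by
    have h1 : (((toPrincipalIdeal (𝓞 F) F).range).map Ψ).relIndex ((⊤ : Subgroup _).map Ψ) ≠ 0 := by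
      rw [Subgroup.relIndex_map_map, top_sup_eq, Subgroup.relIndex_top_right]
      intro h0
      have := Subgroup.index_dvd_of_le
        (le_sup_left : (toPrincipalIdeal (𝓞 F) F).range ≤ (toPrincipalIdeal (𝓞 F) F).range ⊔ Ψ.ker)
      rw [h0, zero_dvd_iff] at this
      exact princ_index F this
    rw [← MonoidHom.range_eq_map, ← hI0] at h1
    intro h0
    apply h1
    have : ((toPrincipalIdeal (𝓞 F) F).range).map Ψ ≤ P0 := by
      rintro _ ⟨_, ⟨f, rfl⟩, rfl⟩
      exact hprinc f
    have := Subgroup.relIndex_dvd_of_le_left (dl (galJ σ)).ker this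
    rw [h0, zero_dvd_iff] at this
    exact this
  have hchev := chevalley (toPrincipalIdeal (𝓞 M) M) (Units.map (algebraMap (𝓞 M) M).toMonoidHom)
    (Units.map_injective (FaithfulSMul.algebraMap_injective (𝓞 M) M)) (princ_ker M)
    (galA σ) (galJ σ) (galU σ) hA3 hI3
    (by intro x; ext1; rw [galJ_val, coe_toPrincipalIdeal, coe_toPrincipalIdeal, galI_span, galA_val])
    (by intro x; ext1; rfl)
    (h90 σ hσ hcard) (princ_index M) hfin0
    (by
      intro x hx
      rw [hI0] at hx
      obtain ⟨z, rfl⟩ := hx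
      have hz : z ∈ H := by rw [hHtop]; exact Subgroup.mem_top z
      obtain ⟨_, ⟨a, ha, rfl⟩, _, ⟨y, rfl⟩, hy⟩ := Subgroup.mem_sup.1 (Subgroup.mem_comap.1 hz)
      exact ⟨y, a, ha, hy.symm⟩)
    hherb.2
  rw [hherb.1] at hchev
  have := Nat.pos_of_ne_zero hherb.2
  omega

end Cubic
end Scholz

namespace Scholz
section Tower
set_option linter.unusedSectionVars false
variable {F N : Type} [Field F] [Field N] [NumberField F] [NumberField N] [Algebra F N]
  [IsGalois F N]

lemma perfect_res (p : Ideal (𝓞 F)) [p.IsPrime] (hp : p ≠ ⊥) : PerfectField p.ResidueField := by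
  have : p.IsMaximal := Ideal.IsPrime.isMaximal inferInstance hp
  have : Finite (𝓞 F ⧸ p) := Ideal.finiteQuotientOfFreeOfNeBot p hp
  have : Finite p.ResidueField :=
    Finite.of_surjective (algebraMap (𝓞 F ⧸ p) p.ResidueField)
      (Ideal.bijective_algebraMap_quotient_residueField p).2
  infer_instance

variable (M : IntermediateField F N) [IsGalois F M]

lemma tower_ram (h3 : Module.finrank F M = 3) (P : Ideal (𝓞 N)) [P.IsPrime] (hP : P ≠ ⊥)
    (hI : ¬ 3 ∣ Nat.card (P.inertia Gal(N/F))) : (P.under (𝓞 M)).ramificationIdx (𝓞 F) = 1 := by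
  set p := P.under (𝓞 F) with hp
  have hpb : p ≠ ⊥ := Ideal.under_ne_bot (𝓞 F) hP
  have := perfect_res p hpb
  have hQl : (P.under (𝓞 M)).LiesOver p := ⟨by rw [hp, Ideal.under_under]⟩
  have h1 := Ideal.card_inertia_eq_ramificationIdxIn (G := Gal(N/F)) p P
  rw [Ideal.ramificationIdxIn_eq_ramificationIdx p P Gal(N/F),
    Ideal.ramificationIdx_tower (P.under (𝓞 M)) P] at h1
  have h2 := Ideal.ncard_primesOver_mul_ramificationIdxIn_mul_inertiaDegIn p (𝓞 M) Gal(M/F)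
  rw [Ideal.ramificationIdxIn_eq_ramificationIdx p (P.under (𝓞 M)) Gal(M/F),
    IsGalois.card_aut_eq_finrank, h3] at h2
  have h3 : (P.under (𝓞 M)).ramificationIdx (𝓞 F) ∣ 3 :=
    ⟨(p.primesOver (𝓞 M)).ncard * p.inertiaDegIn (𝓞 M), by rw [← h2]; ring⟩
  rcases (Nat.dvd_prime Nat.prime_three).1 h3 with h | h
  · exact h
  · rw [h] at h1
    exact absurd ⟨_, h1⟩ hI

lemma tower_split (h3 : Module.finrank F M = 3) (P : Ideal (𝓞 N)) [P.IsPrime] (hP : P ≠ ⊥)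
    (hI : ¬ 3 ∣ Nat.card (MulAction.stabilizer Gal(N/F) P)) :
    ((P.under (𝓞 F)).primesOver (𝓞 M)).ncard = 3 := by
  set p := P.under (𝓞 F) with hp
  have hpb : p ≠ ⊥ := Ideal.under_ne_bot (𝓞 F) hP
  have := perfect_res p hpb
  have hQl : (P.under (𝓞 M)).LiesOver p := ⟨by rw [hp, Ideal.under_under]⟩
  have h1 := Ideal.card_stabilizer_eq (G := Gal(N/F)) p P
  rw [Ideal.ramificationIdxIn_eq_ramificationIdx p P Gal(N/F),
    Ideal.inertiaDegIn_eq_inertiaDeg p P Gal(N/F),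
    Ideal.ramificationIdx_tower (P.under (𝓞 M)) P,
    Ideal.inertiaDeg_tower (P.under (𝓞 M)) P] at h1
  have h2 := Ideal.ncard_primesOver_mul_ramificationIdxIn_mul_inertiaDegIn p (𝓞 M) Gal(M/F)
  rw [Ideal.ramificationIdxIn_eq_ramificationIdx p (P.under (𝓞 M)) Gal(M/F),
    Ideal.inertiaDegIn_eq_inertiaDeg p (P.under (𝓞 M)) Gal(M/F),
    IsGalois.card_aut_eq_finrank, h3] at h2
  rcases (Nat.dvd_prime Nat.prime_three).1 ⟨_, h2.symm⟩ with h | h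
  · rw [h, one_mul] at h2
    exfalso; apply hI
    rw [h1, ← h2]
    exact ⟨P.ramificationIdx (𝓞 M) * P.inertiaDeg (𝓞 M), by ring⟩
  · exact h

end Tower

section Group
set_option linter.unusedSectionVars false
variable {F N : Type} [Field F] [Field N] [NumberField F] [NumberField N] [Algebra F N]
  [IsGalois F N]
  (ζ t : N) (A C n : F) 

/-- The Kummer data -/
structure KData : Prop where
  hζ : ζ ^ 2 + ζ + 1 = 0
  ht0 : t ≠ 0
  hn0 : n ≠ 0
  ht : t ^ 3 = algebraMap F N A + algebraMap F N C * (ζ - ζ ^ 2)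
  hn : A ^ 2 + 3 * C ^ 2 = n ^ 3
  htop : IntermediateField.adjoin F {ζ, t} = ⊤
  hdeg : Module.finrank F N = 6

variable {ζ t A C n}

lemma KData.z3 (h : KData ζ t A C n) : ζ ^ 3 = 1 := by linear_combination (ζ - 1) * h.hζ
lemma KData.z0 (h : KData ζ t A C n) : ζ ≠ 0 := by
  intro h0; have := h.hζ; rw [h0] at this; norm_num at this
lemma KData.z1 (h : KData ζ t A C n) : ζ ≠ 1 := by
  intro h0; have := h.hζ; rw [h0] at this; norm_num at this

lemma cube_roots {K : Type*} [Field K] {ζ x y : K} (hζ : ζ ^ 2 + ζ + 1 = 0) (h : x ^ 3 = y ^ 3) :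
    ∃ i : ℕ, i < 3 ∧ x = ζ ^ i * y := by
  have : (x - y) * ((x - ζ * y) * (x - ζ ^ 2 * y)) = 0 := by
    linear_combination h + (-x^2*y + x * y^2 * ζ  - y^3 * (ζ - 1) + x*y^2*(0)) * hζ
  rcases mul_eq_zero.1 this with h1 | h1
  · exact ⟨0, by norm_num, by linear_combination h1⟩
  rcases mul_eq_zero.1 h1 with h1 | h1
  · exact ⟨1, by norm_num, by linear_combination h1⟩
  · exact ⟨2, by norm_num, by linear_combination h1⟩

lemma KData.gal (h : KData ζ t A C n) (g : Gal(N/F)) :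
    (g ζ = ζ ∧ ∃ i : ℕ, i < 3 ∧ g t = ζ ^ i * t) ∨
    (g ζ = ζ ^ 2 ∧ ∃ i : ℕ, i < 3 ∧ g t = ζ ^ i * (algebraMap F N n / t)) := by
  have hz := h.hζ
  have h1 : (g ζ) ^ 2 + g ζ + 1 = 0 := by
    have := congrArg g hz
    simpa using this
  have h2 : (g ζ - ζ) * (g ζ - ζ ^ 2) = 0 := by
    linear_combination h1 + (ζ - 1 - g ζ) * hz
  have h3 := congrArg g h.ht
  simp only [map_pow, map_add, map_mul, map_sub, AlgEquiv.commutes] at h3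
  rcases mul_eq_zero.1 h2 with h4 | h4
  · have h5 : g ζ = ζ := by linear_combination h4
    left
    refine ⟨h5, cube_roots hz ?_⟩
    rw [h3, h5, h.ht]
  · have h5 : g ζ = ζ ^ 2 := by linear_combination h4
    right
    refine ⟨h5, cube_roots hz ?_⟩
    have hn := congrArg (algebraMap F N) h.hn
    simp only [map_pow, map_add, map_mul, map_ofNat] at hn
    have ht0 := h.ht0
    rw [h3, h5, div_pow, eq_div_iff (pow_ne_zero 3 ht0), ← hn, h.ht]
    have h4 : ζ ^ 4 = ζ := by linear_combination ζ * h.z3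
    rw [← pow_mul, h4]
    linear_combination (-3*(ζ - ζ^2)*0) * hz + (algebraMap F N C)^2 * (-ζ^2 + 3 * ζ - 3) * hz

lemma KData.ext (h : KData ζ t A C n) (g g' : Gal(N/F)) (h1 : g ζ = g' ζ) (h2 : g t = g' t) :
    g = g' := by
  ext x
  have hx : x ∈ IntermediateField.adjoin F {ζ, t} := by rw [h.htop]; trivial
  induction hx using IntermediateField.adjoin_induction with
  | mem y hy =>
    rcases hy with rfl | rfl
    · exact h1
    · exact h2
  | algebraMap y => rw [AlgEquiv.commutes, AlgEquiv.commutes]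
  | add x y _ _ hx hy => rw [map_add, map_add, hx, hy]
  | inv x _ hx => rw [map_inv₀, map_inv₀, hx]
  | mul x y _ _ hx hy => rw [map_mul, map_mul, hx, hy]

lemma KData.comm (h : KData ζ t A C n) (g g' : Gal(N/F)) : g * g' = g' * g := by
  have z3 := h.z3
  have z0 := h.z0
  have t0 := h.ht0
  have n0 : algebraMap F N n ≠ 0 := by simpa using h.hn0
  have key : ∀ i j : ℕ, (ζ ^ 2) ^ i * ζ ^ i = 1 := by
    intro i _; rw [← mul_pow, ← pow_succ, z3, one_pow]
  rcases h.gal g with ⟨gz, i, _, gt⟩ | ⟨gz, i, _, gt⟩ <;>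
  rcases h.gal g' with ⟨gz', j, _, gt'⟩ | ⟨gz', j, _, gt'⟩ <;>
  apply h.ext <;>
  simp only [AlgEquiv.mul_apply, gz, gz', gt, gt', map_mul, map_pow, map_div₀, AlgEquiv.commutes]
  · ring
  · have := key i 0
    field_simp
    linear_combination (-1) * this
  · have := key j 0
    field_simp
    linear_combination this
  · have h1 := key i 0
    have h2 := key j 0
    field_simp
    linear_combination h2 - h1

lemma KData.order3 (h : KData ζ t A C n) (g : Gal(N/F)) (h3 : g ^ 3 = 1) (h1 : g ≠ 1) :
    ∃ k : ℕ, (g ^ k) ζ = ζ ∧ (g ^ k) t = ζ * t := by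
  have z3 := h.z3
  rcases h.gal g with ⟨gz, i, hi, gt⟩ | ⟨gz, i, hi, gt⟩
  · interval_cases i
    · exfalso; apply h1; apply h.ext
      · rw [gz]; rfl
      · rw [gt]; simp
    · exact ⟨1, by rw [pow_one, gz], by rw [pow_one, gt, pow_one]⟩
    · refine ⟨2, by rw [pow_two, AlgEquiv.mul_apply, gz, gz], ?_⟩
      rw [pow_two, AlgEquiv.mul_apply, gt, map_mul, map_pow, gz, gt]
      linear_combination ζ * t * z3
  · exfalso
    have h4 : (g ^ 3) ζ = ζ ^ 2 := by
      rw [pow_succ, pow_two, AlgEquiv.mul_apply, AlgEquiv.mul_apply, gz, map_pow, gz, map_pow,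
        map_pow, gz]
      linear_combination ζ ^ 2 * (ζ ^ 3 + 1) * z3
    rw [h3, AlgEquiv.one_apply] at h4
    have : ζ * (ζ - 1) = 0 := by linear_combination -h4
    rcases mul_eq_zero.1 this with h' | h'
    · exact h.z0 h'
    · exact h.z1 (by linear_combination h')


lemma KData.not_dvd (h : KData ζ t A C n) (H : Subgroup Gal(N/F))
    (hH : ∀ σ ∈ H, σ ζ = ζ → σ t = ζ * t → False) : ¬ 3 ∣ Nat.card H := by
  intro hdvd
  have : Fact (Nat.Prime 3) := ⟨Nat.prime_three⟩
  obtain ⟨g, hg⟩ := exists_prime_orderOf_dvd_card' (G := H) 3 hdvd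
  obtain ⟨k, hk1, hk2⟩ := h.order3 (g : Gal(N/F))
    (by rw [← Subgroup.coe_pow, ← hg, pow_orderOf_eq_one, Subgroup.coe_one])
    (by
      intro h1
      rw [← Subgroup.orderOf_coe, h1, orderOf_one] at hg
      norm_num at hg)
  exact hH _ (H.pow_mem g.2 k) hk1 hk2

theorem KData.contra (h : KData ζ t A C n)
    (hunr : ∀ P : Ideal (𝓞 N), P ≠ ⊥ → P.IsPrime → ∀ σ : Gal(N/F), σ ζ = ζ → σ t = ζ * t →
      ∃ x : 𝓞 N, σ • x - x ∉ P)
    (hgen : Subgroup.closure {c : ClassGroup (𝓞 F) | ∃ p : (Ideal (𝓞 F))⁰, p.1.IsPrime ∧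
      ClassGroup.mk0 p = c ∧ ∃ P : Ideal (𝓞 N), P.IsPrime ∧ P ≠ ⊥ ∧ P.under (𝓞 F) = p.1 ∧
        ∀ σ : Gal(N/F), σ ζ = ζ → σ t = ζ * t → σ • P ≠ P} ⊔ (cb (ClassGroup (𝓞 F))).range = ⊤) :
    False := by
  have hcard : Nat.card Gal(N/F) = 6 := by rw [IsGalois.card_aut_eq_finrank, h.hdeg]
  have : Fact (Nat.Prime 2) := ⟨Nat.prime_two⟩
  obtain ⟨τ, hτ⟩ := exists_prime_orderOf_dvd_card' (G := Gal(N/F)) 2 (by rw [hcard]; norm_num)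
  have hτ2 : τ ^ 2 = 1 := by rw [← hτ, pow_orderOf_eq_one]
  have hτζ : τ ζ = ζ ^ 2 := by
    rcases h.gal τ with ⟨gz, i, hi, gt⟩ | ⟨gz, _⟩
    · exfalso
      have h1 : (τ ^ 2) t = t := by rw [hτ2]; rfl
      rw [pow_two, AlgEquiv.mul_apply, gt, map_mul, map_pow, gz, gt, ← mul_assoc] at h1
      have h2 : ζ ^ i * ζ ^ i = 1 := mul_right_cancel₀ h.ht0 (by rw [h1, one_mul])
      have h3 : i = 0 := by
        have z3 := h.z3
        interval_cases i
        · rfl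
        · exfalso; apply h.z1
          linear_combination z3 - ζ * h2
        · exfalso; apply h.z1
          linear_combination h2 - ζ * z3
      have : τ = 1 := by
        apply h.ext
        · rw [gz]; rfl
        · rw [gt, h3]; simp
      rw [this, orderOf_one] at hτ
      norm_num at hτ
    · exact gz
  let H := Subgroup.zpowers τ
  have hHn : H.Normal := ⟨fun x hx g => by rw [h.comm g x, mul_assoc, mul_inv_cancel, mul_one]; exact hx⟩
  let M := IntermediateField.fixedField H
  have hgal : IsGalois F M := IsGalois.of_fixedField_normal_subgroup H
  have hMN : Module.finrank M N = 2 := by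
    rw [IntermediateField.finrank_fixedField_eq_card, Nat.card_zpowers, hτ]
  have hM3 : Module.finrank F M = 3 := by
    have := Module.finrank_mul_finrank F M N
    rw [hMN, h.hdeg] at this
    omega
  have hMf : ∀ x : M, τ (x : N) = x := fun x => x.2 ⟨τ, Subgroup.mem_zpowers τ⟩
  refine no_unram_cubic (F := F) (M := M) hM3 ?_ ?_ ?_
  · intro x hx
    have hx' : (x : N) ^ 3 = 1 ^ 3 := by rw [one_pow]; exact_mod_cast hx
    obtain ⟨i, hi, hxi⟩ := cube_roots h.hζ hx'
    rw [mul_one] at hxi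
    have h1 := hMf x
    rw [hxi, map_pow, hτζ] at h1
    interval_cases i
    · ext; simpa using hxi
    · exfalso
      have : ζ * (ζ - 1) = 0 := by linear_combination h1
      rcases mul_eq_zero.1 this with h' | h'
      · exact h.z0 h'
      · exact h.z1 (by linear_combination h')
    · exfalso
      have z3 := h.z3
      have : ζ * (ζ - 1) = 0 := by linear_combination (-1) * h1 + ζ * z3
      rcases mul_eq_zero.1 this with h' | h'
      · exact h.z0 h'
      · exact h.z1 (by linear_combination h')
  · intro Q hQ hQp
    have hQm : Q.IsMaximal := hQp.isMaximal hQ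
    obtain ⟨P, hPm, hPQ⟩ := Ideal.exists_maximal_ideal_liesOver_of_isIntegral (S := 𝓞 N) Q
    have hP0 : P ≠ ⊥ := Ideal.ne_bot_of_liesOver_of_ne_bot hQ P
    have := tower_ram M hM3 P hP0 (h.not_dvd _ (by
      intro σ hσ h1 h2
      obtain ⟨x, hx⟩ := hunr P hP0 inferInstance σ h1 h2
      exact hx (hσ x)))
    rwa [← hPQ.over] at this
  · rw [eq_top_iff, ← hgen]
    apply sup_le_sup_right
    apply Subgroup.closure_mono
    rintro c ⟨p, hp, rfl, P, hP, hP0, hPp, hst⟩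
    refine ⟨p, hp, ?_, rfl⟩
    rw [← hPp]
    exact tower_split M hM3 P hP0 (h.not_dvd _ (by
      intro σ hσ h1 h2
      exact hst σ h1 h2 hσ))

end Group
end Scholz

namespace Scholz
section Local
set_option linter.unusedSectionVars false

lemma coe_smul_int {F N : Type} [Field F] [Field N] [Algebra F N] (σ : Gal(N/F)) (x : 𝓞 N) :
    ((σ • x : 𝓞 N) : N) = σ (x : N) := rfl

lemma int_ext {N : Type} [Field N] {x y : 𝓞 N} (h : algebraMap (𝓞 N) N x = algebraMap (𝓞 N) N y) :
    x = y := RingOfIntegers.ext h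

/-- local unit representative -/
lemma local_rep {R : Type*} [CommRing R] [IsDedekindDomain R] (γ : R) (hγ : γ ≠ 0) (b : Ideal R)
    (hb : Ideal.span {γ} = b ^ 3) (Q : Ideal R) [hQ : Q.IsPrime] :
    ∃ x e y : R, x ≠ 0 ∧ e ^ 3 * γ = x ^ 3 * y ∧ y ∉ Q := by
  have hb0 : b ≠ ⊥ := by
    rintro rfl
    apply hγ
    rw [← Ideal.span_singleton_eq_bot, hb]; simp
  have hlt : ¬ b ≤ b * Q := by
    intro h
    have h1 : b * Q = b := le_antisymm Ideal.mul_le_left h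
    have : Q = 1 := mul_left_cancel₀ hb0 (by rw [h1, mul_one])
    exact hQ.ne_top (by rw [this, Ideal.one_eq_top])
  obtain ⟨x, hxb, hxQ⟩ := SetLike.not_le_iff_exists.1 hlt
  have hx0 : x ≠ 0 := by rintro rfl; exact hxQ (zero_mem _)
  obtain ⟨c, hc⟩ := Ideal.dvd_iff_le.2 ((Ideal.span_singleton_le_iff_mem b).2 hxb)
  have hcQ : ¬ c ≤ Q := by
    intro h
    apply hxQ
    rw [← Ideal.span_singleton_le_iff_mem, hc]
    exact Ideal.mul_mono_right h
  obtain ⟨e, hec, heQ⟩ := SetLike.not_le_iff_exists.1 hcQ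
  have hmem : e ^ 3 * γ ∈ Ideal.span {x ^ 3} := by
    rw [← Ideal.span_singleton_pow, hc, mul_pow, mul_comm (b ^ 3), ← hb]
    exact Ideal.mul_mem_mul (Ideal.pow_mem_pow hec 3) (Ideal.mem_span_singleton_self γ)
  obtain ⟨y, hy⟩ := Ideal.mem_span_singleton'.1 hmem
  refine ⟨x, e, y, hx0, by rw [← hy, mul_comm], ?_⟩
  intro hyQ
  have h1 : Ideal.span {e} ^ 3 * b ^ 3 = (Ideal.span {y} * c ^ 3) * b ^ 3 := by
    rw [mul_assoc, ← mul_pow c b, mul_comm c b, ← hc, ← hb]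
    simp only [Ideal.span_singleton_pow, Ideal.span_singleton_mul_span_singleton]
    rw [hy]
  have h2 := mul_right_cancel₀ (pow_ne_zero 3 hb0) h1
  have h3 : e ^ 3 ∈ Q := by
    have : e ^ 3 ∈ Ideal.span {e} ^ 3 := Ideal.pow_mem_pow (Ideal.mem_span_singleton_self e) 3
    rw [h2] at this
    have h4 : Ideal.span {y} * c ^ 3 ≤ Ideal.span {y} := Ideal.mul_le_left
    exact (Ideal.span_singleton_le_iff_mem Q).2 hyQ (h4 this)
  exact heQ (hQ.mem_of_pow_mem 3 h3)

variable {F L N : Type} [Field F] [Field L] [Field N] [NumberField F] [NumberField L]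
  [NumberField N] [Algebra F N] [Algebra L N]
  (σ : Gal(N/F)) (hfix : ∀ x : L, σ (algebraMap L N x) = algebraMap L N x)
  (ζ γ : 𝓞 L) (hζ : ζ ^ 2 + ζ + 1 = 0) (t : N) (ht : t ^ 3 = algebraMap L N γ)
  (hσt : σ t = algebraMap L N ζ * t)
include hfix hζ ht hσt

lemma unram_away (b : Ideal (𝓞 L)) (hγ : γ ≠ 0) (hb : Ideal.span {γ} = b ^ 3)
    (P : Ideal (𝓞 N)) [hP : P.IsPrime] (h3 : (3 : 𝓞 N) ∉ P) : ∃ x : 𝓞 N, σ • x - x ∉ P := by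
  obtain ⟨b, e, y, hb0, hy, hyQ⟩ := local_rep γ hγ b hb (P.under (𝓞 L))
  have hb0' : algebraMap L N b ≠ 0 := by simpa using hb0
  have hint : (algebraMap L N e / algebraMap L N b * t) ^ 3 = algebraMap L N y := by
    have h1 : (e : L) ^ 3 * γ = (b : L) ^ 3 * y := by exact_mod_cast congrArg (algebraMap (𝓞 L) L) hy
    have h2 := congrArg (algebraMap L N) h1
    simp only [map_mul, map_pow] at h2
    rw [mul_pow, ht, div_pow]
    field_simp
    exact h2
  have hI : IsIntegral ℤ (algebraMap L N e / algebraMap L N b * t) := by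
    apply IsIntegral.of_pow (n := 3) (by norm_num)
    rw [hint]
    exact (RingOfIntegers.isIntegral_coe y).map (algebraMap L N).toIntAlgHom
  let x : 𝓞 N := ⟨_, hI⟩
  have hxc : (x : N) = algebraMap L N e / algebraMap L N b * t := rfl
  refine ⟨x, ?_⟩
  have hσx : σ • x - x = (algebraMap (𝓞 L) (𝓞 N) ζ - 1) * x := by
    apply int_ext
    rw [map_sub, map_mul, map_sub]
    change σ (x : N) - x = (algebraMap L N ζ - 1) * x
    rw [hxc, map_mul, map_div₀, hfix, hfix, hσt]; ring
  rw [hσx]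
  intro hmem
  rcases hP.mem_or_mem hmem with h | h
  · apply h3
    have : (3 : 𝓞 N) = (algebraMap (𝓞 L) (𝓞 N) ζ - 1) * (-(algebraMap (𝓞 L) (𝓞 N) ζ) - 2) := by
      have := congrArg (algebraMap (𝓞 L) (𝓞 N)) hζ
      simp only [map_add, map_pow, map_one, map_zero] at this
      linear_combination this
    rw [this]
    exact P.mul_mem_right _ h
  · apply hyQ
    rw [Ideal.mem_comap]
    have : algebraMap (𝓞 L) (𝓞 N) y = x ^ 3 := by
      apply int_ext
      rw [map_pow]
      exact hint.symm
    rw [this]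
    exact P.pow_mem_of_mem h 3 (by norm_num)

lemma tint : IsIntegral ℤ t := by
  apply IsIntegral.of_pow (n := 3) (by norm_num)
  rw [ht]
  exact (RingOfIntegers.isIntegral_coe γ).map (algebraMap L N).toIntAlgHom

lemma unram_at3 (u w : 𝓞 L) (hu : γ - u ^ 3 = 3 * (ζ - ζ ^ 2) * w)
    (hγ3 : ∀ Q : Ideal (𝓞 L), Q.IsPrime → 3 ∈ Q → γ ∉ Q)
    (P : Ideal (𝓞 N)) [hP : P.IsPrime] (h3 : (3 : 𝓞 N) ∈ P) : ∃ x : 𝓞 N, σ • x - x ∉ P := by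
  have hζN : (algebraMap L N ζ) ^ 2 + algebraMap L N ζ + 1 = 0 := by
    have h1 : (ζ : L) ^ 2 + ζ + 1 = 0 := by exact_mod_cast congrArg (algebraMap (𝓞 L) L) hζ
    have h2 := congrArg (algebraMap L N) h1
    simpa only [map_mul, map_pow, map_add, map_one, map_zero] using h2
  have huN : algebraMap L N γ - algebraMap L N u ^ 3 =
      3 * (algebraMap L N ζ - algebraMap L N ζ ^ 2) * algebraMap L N w := by
    have h1 := congrArg (algebraMap (𝓞 L) L) hu
    simp only [map_mul, map_pow, map_sub, map_ofNat] at h1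
    have h2 := congrArg (algebraMap L N) h1
    simpa only [map_mul, map_pow, map_sub, map_ofNat] using h2
  rw [← ht] at huN
  set z := algebraMap L N ζ with hz
  set s := z - z ^ 2 with hs
  set U := algebraMap L N u
  set W := algebraMap L N w
  have hs2 : s ^ 2 = -3 := by rw [hs]; linear_combination (z ^ 2 - 3 * z + 3) * hζN
  have hs0 : s ≠ 0 := by
    intro h0; rw [h0] at hs2; norm_num at hs2
  have hsz : s * z ^ 2 = -(z - 1) := by
    rw [hs]; linear_combination (-z^2 + 2 * z - 1) * hζN
  obtain ⟨X, hX'⟩ : ∃ X, X = (t - U) / s := ⟨_, rfl⟩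
  have hX : s * X = t - U := by rw [hX']; field_simp
  have hrel : X ^ 3 - s * U * X ^ 2 - U ^ 2 * X + W = 0 := by
    have h1 : t = s * X + U := by rw [hX]; ring
    rw [h1] at huN
    have h30 : (3 : N) * s ≠ 0 := mul_ne_zero (by norm_num) hs0
    apply mul_left_cancel₀ h30
    linear_combination (s * X ^ 3) * hs2 - huN
  have hI : IsIntegral ℤ X := by
    have hIL : IsIntegral (𝓞 L) X := by
      refine ⟨Polynomial.X ^ 3 - Polynomial.C ((ζ - ζ ^ 2) * u) * Polynomial.X ^ 2
        - Polynomial.C (u ^ 2) * Polynomial.X + Polynomial.C w, by monicity!, ?_⟩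
      simp only [Polynomial.eval₂_add, Polynomial.eval₂_sub, Polynomial.eval₂_mul,
        Polynomial.eval₂_pow, Polynomial.eval₂_X, Polynomial.eval₂_C, map_mul, map_sub, map_pow]
      exact hrel
    exact isIntegral_trans (R := ℤ) (A := 𝓞 L) _ hIL
  let x : 𝓞 N := ⟨X, hI⟩
  have hI' := tint σ hfix ζ γ hζ t ht hσt
  let T : 𝓞 N := ⟨t, hI'⟩
  refine ⟨x, ?_⟩
  have hσx : σ • x - x = - (algebraMap (𝓞 L) (𝓞 N) ζ) ^ 2 * T := by
    apply int_ext
    rw [map_sub, map_mul, map_neg, map_pow]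
    change σ X - X = - z ^ 2 * t
    have hσs : σ s = s := by rw [hs, map_sub, map_pow, hfix]
    have : σ X = (z * t - U) / s := by
      rw [hX', map_div₀, map_sub, hσt, hσs, hfix]
    rw [this]
    rw [hX']
    field_simp
    linear_combination t * hsz
  rw [hσx]
  intro hmem
  have hT : T ∈ P := by
    have h1 : T = (-(algebraMap (𝓞 L) (𝓞 N) ζ)) * (- (algebraMap (𝓞 L) (𝓞 N) ζ) ^ 2 * T) := by
      have := congrArg (algebraMap (𝓞 L) (𝓞 N)) hζ
      simp only [map_add, map_pow, map_one, map_zero] at this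
      linear_combination (-(algebraMap (𝓞 L) (𝓞 N) ζ) + 1) * T * this
    rw [h1]
    exact P.mul_mem_left _ hmem
  apply hγ3 (P.under (𝓞 L)) inferInstance
  · rw [Ideal.mem_comap, map_ofNat]; exact h3
  · rw [Ideal.mem_comap]
    have : algebraMap (𝓞 L) (𝓞 N) γ = T ^ 3 := by
      apply int_ext
      rw [map_pow]
      exact ht.symm
    rw [this]
    exact P.pow_mem_of_mem hT 3 (by norm_num)

lemma split_at (P : Ideal (𝓞 N)) [hP : P.IsPrime] (h3 : (3 : 𝓞 N) ∉ P) (v : 𝓞 L)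
    (hγ : γ ∉ P.under (𝓞 L)) (hv : γ - v ^ 3 ∈ P.under (𝓞 L)) : σ • P ≠ P := by
  intro hst
  have hI' := tint σ hfix ζ γ hζ t ht hσt
  let T : 𝓞 N := ⟨t, hI'⟩
  set z := algebraMap (𝓞 L) (𝓞 N) ζ with hz
  set V := algebraMap (𝓞 L) (𝓞 N) v with hV
  have hzz : z ^ 2 + z + 1 = 0 := by
    have := congrArg (algebraMap (𝓞 L) (𝓞 N)) hζ
    simpa only [map_add, map_pow, map_one, map_zero] using this
  have hT3 : algebraMap (𝓞 L) (𝓞 N) γ = T ^ 3 := by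
    apply int_ext
    rw [map_pow]
    exact ht.symm
  have hσT : σ • T = z * T := by
    apply int_ext
    rw [map_mul]
    exact hσt
  have hσL : ∀ y : 𝓞 L, σ • algebraMap (𝓞 L) (𝓞 N) y = algebraMap (𝓞 L) (𝓞 N) y := by
    intro y
    apply int_ext
    exact hfix y
  have key : ∀ y : 𝓞 L, T - algebraMap (𝓞 L) (𝓞 N) y ∉ P := by
    intro y hy
    have h1 : σ • (T - algebraMap (𝓞 L) (𝓞 N) y) ∈ P := by
      have := Ideal.smul_mem_pointwise_smul σ _ P hy
      rwa [hst] at this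
    rw [smul_sub, hσT, hσL] at h1
    have h2 : (z - 1) * T ∈ P := by
      have := P.sub_mem h1 hy
      convert this using 1
      ring
    rcases hP.mem_or_mem h2 with h | h
    · apply h3
      have : (3 : 𝓞 N) = (z - 1) * (-z - 2) := by linear_combination hzz
      rw [this]
      exact P.mul_mem_right _ h
    · apply hγ
      rw [Ideal.mem_comap, hT3]
      exact P.pow_mem_of_mem h 3 (by norm_num)
  rw [Ideal.mem_comap, map_sub, map_pow, hT3] at hv
  have h4 : T ^ 3 - V ^ 3 = (T - V) * ((T - z * V) * (T - z ^ 2 * V)) := by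
    linear_combination (T^2*V - T * V^2 * z + V^3 * (z - 1)) * hzz
  rw [h4] at hv
  rcases hP.mem_or_mem hv with h | h
  · exact key v h
  rcases hP.mem_or_mem h with h | h
  · exact key (ζ * v) (by rw [map_mul]; exact h)
  · exact key (ζ ^ 2 * v) (by rw [map_mul, map_pow]; exact h)

end Local
end Scholz

namespace Scholz
section Build
set_option linter.unusedSectionVars false
open Polynomial

variable {F L N : Type} [Field F] [Field L] [Field N] [NumberField F] [NumberField L]
  [NumberField N] [Algebra F L] [Algebra F N] [Algebra L N] [IsScalarTower F L N]

lemma adjoin_two (z : L) (hz : IntermediateField.adjoin F {z} = ⊤) (t : N)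
    (ht : IntermediateField.adjoin L {t} = ⊤) :
    IntermediateField.adjoin F {algebraMap L N z, t} = ⊤ := by
  set K := IntermediateField.adjoin F {algebraMap L N z, t} with hK
  have hzK : algebraMap L N z ∈ K := IntermediateField.subset_adjoin _ _ (by simp)
  have htK : t ∈ K := IntermediateField.subset_adjoin _ _ (by simp)
  have hLK : ∀ x : L, algebraMap L N x ∈ K := by
    intro x
    have hx : x ∈ IntermediateField.adjoin F {z} := by rw [hz]; trivial
    induction hx using IntermediateField.adjoin_induction with
    | mem y hy => rw [Set.mem_singleton_iff.1 hy]; exact hzK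
    | algebraMap y => rw [← IsScalarTower.algebraMap_apply]; exact K.algebraMap_mem y
    | add x y _ _ hx hy => rw [map_add]; exact K.add_mem hx hy
    | inv x _ hx => rw [map_inv₀]; exact K.inv_mem hx
    | mul x y _ _ hx hy => rw [map_mul]; exact K.mul_mem hx hy
  rw [eq_top_iff]
  intro x _
  have hx : x ∈ IntermediateField.adjoin L {t} := by rw [ht]; trivial
  induction hx using IntermediateField.adjoin_induction with
  | mem y hy => rw [Set.mem_singleton_iff.1 hy]; exact htK
  | algebraMap y => exact hLK y
  | add x y _ _ hx hy => exact K.add_mem (hx trivial) (hy trivial)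
  | inv x _ hx => exact K.inv_mem (hx trivial)
  | mul x y _ _ hx hy => exact K.mul_mem (hx trivial) (hy trivial)

lemma poly_e1 {K : Type*} [Field K] {ζ : K} (hζ : ζ ^ 2 + ζ + 1 = 0) :
    (X ^ 2 + X + 1 : K[X]) = (X - Polynomial.C ζ) * (X - Polynomial.C (ζ ^ 2)) := by
  have h1 : (Polynomial.C ζ) ^ 2 + Polynomial.C ζ + 1 = (0 : K[X]) := by
    rw [← map_pow, ← map_add, ← map_one Polynomial.C, ← map_add, hζ, map_zero]
  rw [map_pow]
  linear_combination (X - Polynomial.C ζ + 1) * h1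

lemma poly_e2 {K : Type*} [Field K] {ζ : K} (hζ : ζ ^ 2 + ζ + 1 = 0) (y : K) :
    (X - Polynomial.C y) * (X - Polynomial.C (ζ * y)) *
        (X - Polynomial.C (ζ ^ 2 * y)) = X ^ 3 - Polynomial.C (y ^ 3) := by
  have h1 : (Polynomial.C ζ) ^ 2 + Polynomial.C ζ + 1 = (0 : K[X]) := by
    rw [← map_pow, ← map_add, ← map_one Polynomial.C, ← map_add, hζ, map_zero]
  simp only [map_pow, map_mul]
  generalize Polynomial.C ζ = Z at *
  generalize Polynomial.C y = Y at *
  linear_combination (-X^2 * Y + X * Y^2 * Z - Y^3 * (Z - 1)) * h1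

set_option maxHeartbeats 1000000 in
lemma galois_of (ζ t : N) (A C n : F) (hζ : ζ ^ 2 + ζ + 1 = 0) (ht0 : t ≠ 0)
    (ht : t ^ 3 = algebraMap F N A + algebraMap F N C * (ζ - ζ ^ 2))
    (hn : A ^ 2 + 3 * C ^ 2 = n ^ 3)
    (htop : IntermediateField.adjoin F {ζ, t} = ⊤) : IsGalois F N := by
  let f : F[X] := (X ^ 2 + X + 1) * (X ^ 6 - Polynomial.C (2 * A) * X ^ 3 + Polynomial.C (n ^ 3))
  let a := algebraMap F N n
  have hfac : f.map (algebraMap F N) = (X - Polynomial.C ζ) * (X - Polynomial.C (ζ ^ 2)) *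
      (((X - Polynomial.C t) * (X - Polynomial.C (ζ * t)) * (X - Polynomial.C (ζ ^ 2 * t))) *
       ((X - Polynomial.C (a / t)) * (X - Polynomial.C (ζ * (a / t))) *
        (X - Polynomial.C (ζ ^ 2 * (a / t))))) := by
    rw [poly_e2 hζ, poly_e2 hζ, ← poly_e1 hζ]
    simp only [f, Polynomial.map_mul, Polynomial.map_add, Polynomial.map_sub, Polynomial.map_pow,
      Polynomial.map_X, Polynomial.map_one, Polynomial.map_C]
    congr 1
    have e3 : t ^ 3 * (a / t) ^ 3 = algebraMap F N (n ^ 3) := by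
      rw [map_pow, ← mul_pow, mul_div_cancel₀ _ ht0]
    have e4 : (a / t) ^ 3 = algebraMap F N A - algebraMap F N C * (ζ - ζ ^ 2) := by
      apply mul_left_cancel₀ (pow_ne_zero 3 ht0)
      rw [e3, ← hn, ht]
      simp only [map_add, map_mul, map_pow, map_ofNat]
      linear_combination (algebraMap F N C) ^ 2 * (ζ^2 - 3 * ζ + 3) * hζ
    have e5 : algebraMap F N (2 * A) = t ^ 3 + (a / t) ^ 3 := by
      rw [e4, ht, map_mul, map_ofNat]; ring
    rw [e5, ← e3, map_add, map_mul]
    ring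
  have hf0 : f.map (algebraMap F N) ≠ 0 := by
    rw [hfac]
    simp only [mul_ne_zero_iff, X_sub_C_ne_zero, ne_eq, not_false_eq_true, and_self]
  have hspl : IsSplittingField F N f := by
    rw [isSplittingField_iff_intermediateField]
    constructor
    · rw [hfac]
      exact ((Splits.X_sub_C _).mul (Splits.X_sub_C _)).mul
        ((((Splits.X_sub_C _).mul (Splits.X_sub_C _)).mul (Splits.X_sub_C _)).mul
        (((Splits.X_sub_C _).mul (Splits.X_sub_C _)).mul (Splits.X_sub_C _)))
    · rw [eq_top_iff, ← htop]
      apply IntermediateField.adjoin.mono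
      rintro y (rfl | rfl)
      · rw [mem_rootSet_of_ne (by rintro h; rw [h] at hf0; simp at hf0), ← eval_map_algebraMap, hfac]
        simp
      · rw [mem_rootSet_of_ne (by rintro h; rw [h] at hf0; simp at hf0), ← eval_map_algebraMap, hfac]
        simp
  have : Normal F N := Normal.of_isSplittingField f
  exact ⟨⟩

lemma no_gamma_aux (hFL : Module.finrank F L = 2) (hLN : Module.finrank L N = 3)
    (ζ γ : 𝓞 L) (hζ : ζ ^ 2 + ζ + 1 = 0)
    (A C n : F) (hγ : (γ : L) = algebraMap F L A + algebraMap F L C * (ζ - (ζ : L) ^ 2))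
    (hn : A ^ 2 + 3 * C ^ 2 = n ^ 3) (hn0 : n ≠ 0) (hγ0 : γ ≠ 0)
    (hL : IntermediateField.adjoin F {(ζ : L)} = ⊤)
    (t : N) (ht : t ^ 3 = algebraMap L N γ) (hN : IntermediateField.adjoin L {t} = ⊤)
    (b : Ideal (𝓞 L)) (hb : Ideal.span {γ} = b ^ 3)
    (u w : 𝓞 L) (hu : γ - u ^ 3 = 3 * (ζ - ζ ^ 2) * w)
    (hγ3 : ∀ Q : Ideal (𝓞 L), Q.IsPrime → 3 ∈ Q → γ ∉ Q)
    (hgen : Subgroup.closure {c : ClassGroup (𝓞 F) | ∃ p : (Ideal (𝓞 F))⁰, p.1.IsPrime ∧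
      ClassGroup.mk0 p = c ∧ ∃ Q : Ideal (𝓞 L), Q.IsPrime ∧ Q ≠ ⊥ ∧ Q.under (𝓞 F) = p.1 ∧
        3 ∉ Q ∧ γ ∉ Q ∧ ∃ v, γ - v ^ 3 ∈ Q} ⊔ (cb (ClassGroup (𝓞 F))).range = ⊤) : False := by
  have hζN : (algebraMap L N ζ) ^ 2 + algebraMap L N ζ + 1 = 0 := by
    have h1 := congrArg (algebraMap (𝓞 L) L) hζ
    have h2 := congrArg (algebraMap L N) h1
    simpa only [map_mul, map_pow, map_add, map_one, map_zero] using h2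
  have hγN : t ^ 3 = algebraMap F N A + algebraMap F N C *
      (algebraMap L N ζ - algebraMap L N ζ ^ 2) := by
    rw [ht, hγ]
    simp only [map_add, map_mul, map_sub, map_pow, ← IsScalarTower.algebraMap_apply]
  have ht0 : t ≠ 0 := by
    rintro rfl
    apply hγ0
    have : algebraMap L N γ = 0 := by rw [← ht]; norm_num
    simpa using this
  have htop := adjoin_two (F := F) (ζ : L) hL t hN
  have hG : IsGalois F N := galois_of _ t A C n hζN ht0 hγN hn htop
  have hK : KData (algebraMap L N ζ) t A C n :=
    ⟨hζN, ht0, hn0, hγN, hn, htop, by rw [← Module.finrank_mul_finrank F L N, hFL, hLN]⟩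
  have hfix : ∀ σ : Gal(N/F), σ (algebraMap L N ζ) = algebraMap L N ζ →
      ∀ x : L, σ (algebraMap L N x) = algebraMap L N x := by
    intro σ hσ x
    have hx : x ∈ IntermediateField.adjoin F {(ζ : L)} := by rw [hL]; trivial
    induction hx using IntermediateField.adjoin_induction with
    | mem y hy => rw [Set.mem_singleton_iff.1 hy]; exact hσ
    | algebraMap y => rw [← IsScalarTower.algebraMap_apply]; exact σ.commutes y
    | add x y _ _ hx hy => rw [map_add, map_add, hx, hy]
    | inv x _ hx => rw [map_inv₀, map_inv₀, hx]
    | mul x y _ _ hx hy => rw [map_mul, map_mul, hx, hy]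
  refine hK.contra ?_ ?_
  · intro P hP hPp σ h1 h2
    by_cases h3 : (3 : 𝓞 N) ∈ P
    · exact unram_at3 σ (hfix σ h1) ζ γ hζ t ht h2 u w hu hγ3 P h3
    · exact unram_away σ (hfix σ h1) ζ γ hζ t ht h2 b hγ0 hb P h3
  · rw [eq_top_iff, ← hgen]
    apply sup_le_sup_right
    apply Subgroup.closure_mono
    rintro c ⟨p, hp, rfl, Q, hQ, hQ0, hQp, hQ3, hQγ, v, hv⟩
    refine ⟨p, hp, rfl, ?_⟩
    have hQm : Q.IsMaximal := hQ.isMaximal hQ0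
    obtain ⟨P, hPm, hPQ⟩ := Ideal.exists_maximal_ideal_liesOver_of_isIntegral (S := 𝓞 N) Q
    refine ⟨P, inferInstance, Ideal.ne_bot_of_liesOver_of_ne_bot hQ0 P, ?_, ?_⟩
    · rw [← hQp, hPQ.over, Ideal.under_under]
    · intro σ h1 h2
      refine split_at σ (hfix σ h1) ζ γ hζ t ht h2 P ?_ v ?_ ?_
      · intro h; apply hQ3; rw [hPQ.over, Ideal.mem_comap, map_ofNat]; exact h
      · rw [← hPQ.over]; exact hQγ
      · rw [← hPQ.over]; exact hv

end Build

theorem no_gamma {F L : Type} [Field F] [Field L] [NumberField F] [NumberField L]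
    [Algebra F L] (hFL : Module.finrank F L = 2)
    (ζ γ : 𝓞 L) (hζ : ζ ^ 2 + ζ + 1 = 0)
    (A C n : F) (hγ : (γ : L) = algebraMap F L A + algebraMap F L C * (ζ - (ζ : L) ^ 2))
    (hn : A ^ 2 + 3 * C ^ 2 = n ^ 3) (hn0 : n ≠ 0) (hγ0 : γ ≠ 0)
    (hL : IntermediateField.adjoin F {(ζ : L)} = ⊤)
    (hcube : ∀ x : L, x ^ 3 ≠ γ)
    (b : Ideal (𝓞 L)) (hb : Ideal.span {γ} = b ^ 3)
    (u w : 𝓞 L) (hu : γ - u ^ 3 = 3 * (ζ - ζ ^ 2) * w)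
    (hγ3 : ∀ Q : Ideal (𝓞 L), Q.IsPrime → 3 ∈ Q → γ ∉ Q)
    (hgen : Subgroup.closure {c : ClassGroup (𝓞 F) | ∃ p : (Ideal (𝓞 F))⁰, p.1.IsPrime ∧
      ClassGroup.mk0 p = c ∧ ∃ Q : Ideal (𝓞 L), Q.IsPrime ∧ Q ≠ ⊥ ∧ Q.under (𝓞 F) = p.1 ∧
        3 ∉ Q ∧ γ ∉ Q ∧ ∃ v, γ - v ^ 3 ∈ Q} ⊔ (cb (ClassGroup (𝓞 F))).range = ⊤) : False := by
  have hirr : Irreducible (Polynomial.X ^ 3 - Polynomial.C (γ : L)) :=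
    X_pow_sub_C_irreducible_of_prime Nat.prime_three hcube
  have : Fact (Irreducible (Polynomial.X ^ 3 - Polynomial.C (γ : L))) := ⟨hirr⟩
  let N := AdjoinRoot (Polynomial.X ^ 3 - Polynomial.C (γ : L))
  have hfin : Module.Finite L N := (AdjoinRoot.powerBasis hirr.ne_zero).finite
  have : NumberField N := NumberField.of_module_finite L N
  have hLN : Module.finrank L N = 3 := by
    rw [(AdjoinRoot.powerBasis hirr.ne_zero).finrank, AdjoinRoot.powerBasis_dim]
    exact Polynomial.natDegree_X_pow_sub_C
  refine no_gamma_aux (F := F) (L := L) (N := N) hFL hLN ζ γ hζ A C n hγ hn hn0 hγ0 hL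
    (AdjoinRoot.root _) ?_ ?_ b hb u w hu hγ3 hgen
  · have := AdjoinRoot.eval₂_root (Polynomial.X ^ 3 - Polynomial.C (γ : L))
    rw [Polynomial.eval₂_sub, Polynomial.eval₂_pow, Polynomial.eval₂_X, Polynomial.eval₂_C] at this
    exact sub_eq_zero.1 this
  · exact IntermediateField.adjoin_root_eq_top _
end Scholz

namespace Scholz
section Cop
set_option linter.unusedSectionVars false
variable {R : Type*} [CommRing R] [IsDedekindDomain R]

lemma coprime_rep (c : ClassGroup R) (J : Ideal R) (hJ : J ≠ ⊥) :
    ∃ a : (Ideal R)⁰, ClassGroup.mk0 a = c ∧ a.1 ⊔ J = ⊤ := by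
  obtain ⟨I, hI⟩ := ClassGroup.mk0_surjective c⁻¹
  have hI0 : I.1 ≠ ⊥ := nonZeroDivisors.ne_zero I.2
  obtain ⟨x, hx⟩ := IsDedekindDomain.exists_sup_span_eq (I := I.1 * J * I.1) (J := I.1)
    Ideal.mul_le_right (mul_ne_zero (mul_ne_zero hI0 hJ) hI0)
  have hx0 : x ≠ 0 ∨ I.1 * J = ⊤ := by
    by_contra! h
    rw [h.1] at hx
    simp only [Ideal.span_singleton_zero, sup_bot_eq] at hx
    apply h.2
    have : I.1 * J * I.1 = ⊤ * I.1 := by rw [hx, Ideal.top_mul]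
    exact mul_right_cancel₀ hI0 this
  have key : ∃ y, y ≠ 0 ∧ I.1 * J ⊔ Ideal.span {y} = I.1 := by
    rcases hx0 with h | h
    · refine ⟨x, h, le_antisymm (sup_le Ideal.mul_le_left ?_) ?_⟩
      · rw [← hx]; exact le_sup_right
      · conv_lhs => rw [← hx]
        exact sup_le_sup_right Ideal.mul_le_left _
    · have : I.1 = ⊤ := top_le_iff.1 (h ▸ Ideal.mul_le_left)
      refine ⟨1, one_ne_zero, ?_⟩
      rw [h, this]; simp
  obtain ⟨y, hy0, hy⟩ := key
  have hyI : Ideal.span {y} ≤ I.1 := by rw [← hy]; exact le_sup_right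
  obtain ⟨a, ha⟩ := Ideal.dvd_iff_le.2 hyI
  have ha0 : a ≠ ⊥ := by
    rintro rfl
    rw [Ideal.mul_bot, Ideal.span_singleton_eq_bot] at ha
    exact hy0 ha
  refine ⟨⟨a, mem_nonZeroDivisors_of_ne_zero ha0⟩, ?_, ?_⟩
  · have h1 : ClassGroup.mk0 (I * ⟨a, mem_nonZeroDivisors_of_ne_zero ha0⟩) = 1 := by
      rw [ClassGroup.mk0_eq_one_iff]
      change Submodule.IsPrincipal (I.1 * a)
      rw [← ha]
      exact ⟨⟨y, rfl⟩⟩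
    rw [map_mul, hI] at h1
    exact (inv_mul_eq_one.1 h1).symm
  · change a ⊔ J = ⊤
    rw [ha, ← Ideal.mul_sup] at hy
    rw [sup_comm]
    apply mul_left_cancel₀ (a := I.1) hI0
    rw [hy, Ideal.mul_top]

lemma cube_inj {I J : Ideal R} (h : I ^ 3 = J ^ 3) : I = J := by
  classical
  by_cases hI : I = 0
  · rw [hI] at h ⊢
    exact (pow_eq_zero_iff (n := 3) (by norm_num)).1 (by rw [← h, zero_pow (by norm_num)]) |>.symm
  by_cases hJ : J = 0
  · rw [hJ] at h
    exact absurd ((pow_eq_zero_iff (n := 3) (by norm_num)).1 (by rw [h, zero_pow (by norm_num)])) hI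
  have h2 := congrArg UniqueFactorizationMonoid.normalizedFactors h
  rw [UniqueFactorizationMonoid.normalizedFactors_pow,
    UniqueFactorizationMonoid.normalizedFactors_pow] at h2
  have h3 := Multiset.ext.1 h2
  have h4 : UniqueFactorizationMonoid.normalizedFactors I =
      UniqueFactorizationMonoid.normalizedFactors J := by
    ext a
    have := h3 a
    simp only [Multiset.count_nsmul] at this
    omega
  exact associated_iff_eq.1
    ((UniqueFactorizationMonoid.associated_iff_normalizedFactors_eq_normalizedFactors hI hJ).2 h4)

lemma primes_gen (J : Ideal R) (hJ : J ≠ ⊥) :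
    Subgroup.closure {c : ClassGroup R | ∃ p : (Ideal R)⁰, p.1.IsPrime ∧
      ClassGroup.mk0 p = c ∧ p.1 ⊔ J = ⊤} = ⊤ := by
  rw [eq_top_iff]
  intro c _
  obtain ⟨a, rfl, ha⟩ := coprime_rep c J hJ
  obtain ⟨a, ha0⟩ := a
  have ha' : a ≠ 0 := nonZeroDivisors.ne_zero ha0
  clear * - ha ha'
  revert ha0 ha ha'
  induction a using UniqueFactorizationMonoid.induction_on_prime with
  | h₁ => intro _ _ h; exact absurd rfl h
  | h₂ x hx =>
    intro hx0 _ _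
    have : (⟨x, hx0⟩ : (Ideal R)⁰) = 1 := Subtype.ext ((Ideal.isUnit_iff.1 hx).trans Ideal.one_eq_top.symm)
    rw [this, map_one]; exact Subgroup.one_mem _
  | h₃ a p ha0 hp ih =>
    intro hm hcop _
    have hp0 : p ∈ (Ideal R)⁰ := mem_nonZeroDivisors_of_ne_zero hp.ne_zero
    have ha1 : a ∈ (Ideal R)⁰ := mem_nonZeroDivisors_of_ne_zero ha0
    have : (⟨p * a, hm⟩ : (Ideal R)⁰) = ⟨p, hp0⟩ * ⟨a, ha1⟩ := rfl
    rw [this, map_mul]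
    refine Subgroup.mul_mem _ (Subgroup.subset_closure ⟨⟨p, hp0⟩, Ideal.isPrime_of_prime hp, rfl, ?_⟩)
      (ih ha1 ?_ ha0)
    · exact top_le_iff.1 (hcop ▸ sup_le_sup_right Ideal.mul_le_left _)
    · exact top_le_iff.1 (hcop ▸ sup_le_sup_right Ideal.mul_le_right _)
end Cop

section Grp
variable {G : Type*} [CommGroup G] [Finite G]

lemma idx3 (H K : Subgroup G) (hH : (cb G).range ≤ H) (hlt : H < K) : 3 * K.index ≤ H.index := by
  have h1 := Subgroup.relIndex_mul_index hlt.le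
  rw [← h1]
  apply Nat.mul_le_mul_right
  have h2 : H.relIndex K ≠ 1 := fun h => absurd (Subgroup.relIndex_eq_one.1 h) (not_le_of_gt hlt)
  have h3 : IsPGroup 3 (K ⧸ H.subgroupOf K) := by
    intro x
    obtain ⟨x, rfl⟩ := QuotientGroup.mk_surjective x
    refine ⟨1, ?_⟩
    rw [← QuotientGroup.mk_pow, QuotientGroup.eq_one_iff]
    rw [Subgroup.mem_subgroupOf]
    exact hH ⟨x.1, by simp [cb_apply]⟩
  have : Fact (Nat.Prime 3) := ⟨by norm_num⟩
  obtain ⟨n, hn⟩ := IsPGroup.iff_card.1 h3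
  have h4 : H.relIndex K = 3 ^ n := by rw [← hn]; rfl
  rw [h4] at h2 ⊢
  calc 3 = 3 ^ 1 := rfl
    _ ≤ 3 ^ n := Nat.pow_le_pow_right (by norm_num) (Nat.one_le_iff_ne_zero.2 (by rintro rfl; simp at h2))

lemma pick (S : Set G) : ∀ (n : ℕ) (H : Subgroup G), H.index = n → (cb G).range ≤ H →
    Subgroup.closure S ⊔ H = ⊤ →
    ∃ T : Finset G, (T : Set G) ⊆ S ∧ Subgroup.closure (T : Set G) ⊔ H = ⊤ ∧ 3 ^ T.card ≤ H.index := by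
  classical
  intro n
  induction n using Nat.strong_induction_on with
  | _ n ih =>
    intro H hn hc hS
    by_cases hSH : S ⊆ H
    · refine ⟨∅, by simp, ?_, ?_⟩
      · rw [sup_eq_right.2 ((Subgroup.closure_le _).2 hSH)] at hS
        simp [hS]
      · simpa using Nat.one_le_iff_ne_zero.2 H.index_ne_zero_of_finite
    · obtain ⟨s, hs, hsH⟩ := Set.not_subset.1 hSH
      set K := Subgroup.closure {s} ⊔ H with hK
      have hlt : H < K := lt_of_le_of_ne le_sup_right (by
        intro h; apply hsH
        have : s ∈ K := Subgroup.mem_sup_left (Subgroup.subset_closure rfl)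
        rw [← h] at this; exact this)
      have h3 := idx3 H K hc hlt
      have hpos : 0 < K.index := Nat.pos_of_ne_zero K.index_ne_zero_of_finite
      obtain ⟨T, hT, hTK, hTc⟩ := ih K.index (by omega) K rfl (hc.trans hlt.le)
        (top_le_iff.1 (hS ▸ sup_le_sup_left hlt.le _))
      refine ⟨insert s T, ?_, ?_, ?_⟩
      · simp [Set.insert_subset_iff, hs, hT]
      · rw [Finset.coe_insert, Set.insert_eq, Subgroup.closure_union, sup_comm (Subgroup.closure {s}),
          sup_assoc]
        exact hTK
      · calc 3 ^ (insert s T).card ≤ 3 ^ (T.card + 1) :=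
            Nat.pow_le_pow_right (by norm_num) (Finset.card_insert_le _ _)
          _ = 3 * 3 ^ T.card := by ring
          _ ≤ _ := by omega

lemma cb_index : (cb G).range.index = Nat.card {c : G // c ^ 3 = 1} := by
  rw [Subgroup.index_range]
  rfl
end Grp

section Cyc
lemma cyc_card {G : Type*} [CommGroup G] [Finite G] [IsCyclic G] : Nat.card (G ⧸ (cb G).range) ≤ 3 := by
  change (cb G).range.index ≤ 3
  rw [cb_index]
  classical
  have := Fintype.ofFinite G
  have := IsCyclic.card_pow_eq_one_le (α := G) (n := 3) (by norm_num)
  rw [Nat.card_eq_fintype_card, Fintype.card_subtype]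
  convert this
end Cyc
end Scholz

namespace Scholz
section Z3
set_option maxRecDepth 100000
lemma dec1 : ∀ m a b : ZMod 9, 3 * m ≠ 0 → (a * a - m * b * b) ^ 2 = 1 →
    let a2 := a * a + m * b * b
    let b2 := a * b + b * a
    let a4 := a2 * a2 + m * b2 * b2
    let b4 := a2 * b2 + b2 * a2
    let a8 := a4 * a4 + m * b4 * b4
    let b8 := a4 * b4 + b4 * a4
    a8 = 1 ∧ 3 * b8 = 0 := by decide
lemma dec2 : ∀ m a b : ZMod 9, 3 * m = 0 → (a * a - m * b * b) ^ 2 = 1 →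
    let a2 := a * a + m * b * b
    let b2 := a * b + b * a
    let a4 := a2 * a2 + m * b2 * b2
    let b4 := a2 * b2 + b2 * a2
    let a8 := a4 * a4 + m * b4 * b4
    3 * a8 = 3 := by decide
lemma dec3 : ∀ k : ZMod 9, 3 * k ≠ 0 → k ^ 6 = 1 := by decide
lemma dec4 : ∀ a m b : ZMod 9, 3 * a = 3 → 3 * m = 0 → 3 * b = 0 →
    (a * a - m * b * b)  = 1 → a = 1 := by decide

lemma zpow8 {m : ℤ} (z : ℤ√m) : z ^ 8 = ((z * z) * (z * z)) * ((z * z) * (z * z)) := by ring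

lemma norm_zmod {m : ℤ} (z : ℤ√m) : ((z.norm : ℤ) : ZMod 9) =
    (z.re : ZMod 9) * z.re - m * z.im * z.im := by
  rw [Zsqrtd.norm_def]; push_cast; ring

lemma nine3 (x : ℤ) : 3 * (x : ZMod 9) = 0 ↔ (3 : ℤ) ∣ x := by
  have : (3 * (x : ZMod 9)) = ((3 * x : ℤ) : ZMod 9) := by push_cast; ring
  rw [this, ZMod.intCast_zmod_eq_zero_iff_dvd]
  omega

lemma k6 (k : ℤ) (hk : ¬ (3 : ℤ) ∣ k) : (k : ZMod 9) ^ 6 = 1 :=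
  dec3 k (fun h => hk ((nine3 k).1 h))

lemma z8_a {m : ℤ} (hm : ¬ (3 : ℤ) ∣ m) (z : ℤ√m) (k : ℤ) (hk : ¬ (3 : ℤ) ∣ k)
    (hz : z.norm = k ^ 3) : (9 : ℤ) ∣ (z ^ 8).re - 1 ∧ (3 : ℤ) ∣ (z ^ 8).im := by
  have h := dec1 m z.re z.im (fun h => hm ((nine3 m).1 h)) (by
    rw [← norm_zmod, hz]; push_cast; rw [← pow_mul]; exact k6 k hk)
  rw [zpow8]
  constructor
  · have : ((9 : ℕ) : ℤ) ∣ _ := (ZMod.intCast_zmod_eq_zero_iff_dvd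
      (((((z * z) * (z * z)) * ((z * z) * (z * z)) : ℤ√m)).re - 1) 9).1 (by
        have h1 := h.1
        simp only [Zsqrtd.re_mul, Zsqrtd.im_mul]
        push_cast
        rw [h1, sub_self])
    exact_mod_cast this
  · rw [← nine3]
    have h1 := h.2
    simp only [Zsqrtd.re_mul, Zsqrtd.im_mul]
    push_cast
    exact h1

lemma z8_b {m : ℤ} (hm : (3 : ℤ) ∣ m) (z : ℤ√m) (k : ℤ) (hk : ¬ (3 : ℤ) ∣ k)
    (hz : z.norm = k ^ 3) : (3 : ℤ) ∣ (z ^ 8).re - 1 := by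
  have h := dec2 m z.re z.im ((nine3 m).2 hm) (by
    rw [← norm_zmod, hz]; push_cast; rw [← pow_mul]; exact k6 k hk)
  rw [zpow8, ← nine3]
  simp only [Zsqrtd.re_mul, Zsqrtd.im_mul]
  push_cast
  rw [mul_sub, mul_one, sub_eq_zero]
  exact h

/-- the cubic residue invariant at 3 -/
def inv0 {m : ℤ} (z : ℤ√m) : ZMod 3 :=
  if (3 : ℤ) ∣ m then ((z ^ 8).im : ZMod 3) else (((z ^ 8).im / 3 : ℤ) : ZMod 3)

lemma at3_z {m : ℤ} (z z' : ℤ√m) (k k' : ℤ) (hk : ¬ (3 : ℤ) ∣ k) (hk' : ¬ (3 : ℤ) ∣ k')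
    (hz : z.norm = k ^ 3) (hz' : z'.norm = k' ^ 3) (h : inv0 z = inv0 z') :
    ∃ x y : ℤ, (z * z' ^ 2) ^ 8 = ⟨1 + 9 * x, 3 * y⟩ ∧ (¬ (3 : ℤ) ∣ m → (3 : ℤ) ∣ y) := by
  have e : (z * z' ^ 2) ^ 8 = z ^ 8 * (z' ^ 8 * z' ^ 8) := by ring
  unfold inv0 at h
  by_cases hm : (3 : ℤ) ∣ m
  · rw [if_pos hm, if_pos hm] at h
    obtain ⟨p, hp⟩ := z8_b hm z k hk hz
    obtain ⟨p', hp'⟩ := z8_b hm z' k' hk' hz'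
    have h' := (ZMod.intCast_eq_intCast_iff_dvd_sub _ _ 3).1 h
    obtain ⟨q, hq⟩ := h'
    obtain ⟨m', hm'⟩ := hm
    set W := (z * z' ^ 2) ^ 8 with hW
    have him : W.im = 3 * ((z ^ 8).re * (z' ^ 8).re * (2 * q) + 2 * (z ^ 8).im * (z ^ 8).re * p' + 
        (z ^ 8).im * (m' * (z' ^ 8).im ^ 2) + (z ^ 8).im * ((z' ^ 8).re * p') + (z ^ 8).im * p' +
        (z ^ 8).im  + 2 * (z ^ 8).im * p) := by
      rw [e]
      simp only [Zsqrtd.re_mul, Zsqrtd.im_mul]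
      have h1 : (z ^ 8).re = 1 + 3 * p := by linarith
      have h2 : (z' ^ 8).re = 1 + 3 * p' := by linarith
      have h3 : (z' ^ 8).im = (z ^ 8).im + 3 * q := by push_cast at hq; linarith
      rw [h1, h2, h3]
      linear_combination (z ^ 8).im * ((z ^ 8).im + 3 * q) ^ 2 * hm'
    have hre : ∃ t, W.re = 1 + 3 * t := by
      refine ⟨(p + 2 * p' + 3 * p' ^ 2 + 6 * p * p' + 9 * p * p' ^ 2) + m' * ((z ^ 8).re * (z' ^ 8).im ^ 2
        + 2 * (z ^ 8).im * (z' ^ 8).re * (z' ^ 8).im), ?_⟩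
      rw [e]
      simp only [Zsqrtd.re_mul, Zsqrtd.im_mul]
      have h1 : (z ^ 8).re = 1 + 3 * p := by linarith
      have h2 : (z' ^ 8).re = 1 + 3 * p' := by linarith
      rw [h1, h2]
      linear_combination ((1 + 3 * p) * (z' ^ 8).im ^ 2
        + 2 * (z ^ 8).im * (1 + 3 * p') * (z' ^ 8).im) * hm'
    obtain ⟨t, ht⟩ := hre
    have h4 : (W.re : ZMod 9) = 1 := by
      apply dec4 W.re m W.im
      · rw [ht]; push_cast
        have : (9 : ZMod 9) = 0 := rfl
        linear_combination (t : ZMod 9) * this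
      · exact (nine3 m).2 ⟨m', hm'⟩
      · exact (nine3 _).2 ⟨_, him⟩
      · rw [← norm_zmod, hW]
        have hN : ((z * z' ^ 2) ^ 8).norm = (z.norm * z'.norm ^ 2) ^ 8 := by
          change Zsqrtd.normMonoidHom ((z * z' ^ 2) ^ 8) = _
          rw [map_pow, map_mul, map_pow]
          rfl
        rw [hN, hz, hz']
        push_cast
        have h5 := k6 k hk
        have h6 := k6 k' hk'
        calc ((k : ZMod 9) ^ 3 * ((k' : ZMod 9) ^ 3) ^ 2) ^ 8 = ((k : ZMod 9) ^ 6) ^ 4 * ((k' : ZMod 9) ^ 6) ^ 8 := by ring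
          _ = 1 := by rw [h5, h6]; ring
    have h5 : ((9 : ℕ) : ℤ) ∣ W.re - 1 := (ZMod.intCast_zmod_eq_zero_iff_dvd _ 9).1 (by push_cast; rw [h4, sub_self])
    obtain ⟨x, hx⟩ := h5
    refine ⟨x, _, Zsqrtd.ext ?_ him, fun hn => absurd ⟨m', hm'⟩ hn⟩
    push_cast at hx
    simp only; linarith
  · rw [if_neg hm, if_neg hm] at h
    obtain ⟨⟨p, hp⟩, ⟨t, ht⟩⟩ := z8_a hm z k hk hz
    obtain ⟨⟨p', hp'⟩, ⟨t', ht'⟩⟩ := z8_a hm z' k' hk' hz'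
    rw [ht, ht', Int.mul_ediv_cancel_left _ (by norm_num), Int.mul_ediv_cancel_left _ (by norm_num)] at h
    obtain ⟨q, hq⟩ := (ZMod.intCast_eq_intCast_iff_dvd_sub _ _ 3).1 h
    have h1 : (z ^ 8).re = 1 + 9 * p := by linarith
    have h2 : (z' ^ 8).re = 1 + 9 * p' := by linarith
    have h3 : t' = t + 3 * q := by push_cast at hq; linarith
    refine ⟨p + 2 * p' + 9 * p' ^ 2 + 18 * p * p' + 81 * p * p' ^ 2 + m * ((1 + 9 * p) * t' ^ 2 + 2 * t * (1 + 9 * p') * t'),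
      3 * (t * (6 * p' + 27 * p' ^ 2 + 3 * m * t' ^ 2) + (2 * q + t) + 2 * t' * (3 * (p + p' + 9 * p * p'))), ?_, fun _ => ⟨_, rfl⟩⟩
    rw [e]
    ext
    · simp only [Zsqrtd.re_mul, Zsqrtd.im_mul]
      rw [h1, h2, ht, ht']; ring
    · simp only [Zsqrtd.re_mul, Zsqrtd.im_mul]
      rw [h1, h2, ht, ht', h3]; ring

lemma at3_ring {R : Type*} [CommRing R] {m : ℤ} (φ : ℤ√m →+* R) (s : R) (hs : s ^ 2 = -3)
    (hD : (3 : ℤ) ∣ m → ∃ c, φ Zsqrtd.sqrtd = c * s)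
    (z z' : ℤ√m) (k k' : ℤ) (hk : ¬ (3 : ℤ) ∣ k) (hk' : ¬ (3 : ℤ) ∣ k')
    (hz : z.norm = k ^ 3) (hz' : z'.norm = k' ^ 3) (h : inv0 z = inv0 z')
    (g : R) (hg : 512 * g = φ (z * z' ^ 2)) : ∃ u w, g - u ^ 3 = 3 * s * w := by
  obtain ⟨x, y, hxy, hy⟩ := at3_z z z' k k' hk hk' hz hz' h
  have key : ∃ X, (φ (z * z' ^ 2)) ^ 8 = 1 + 3 * s * X := by
    rw [← map_pow, hxy, Zsqrtd.decompose, map_add, map_mul]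
    simp only [map_intCast]
    by_cases hm : (3 : ℤ) ∣ m
    · obtain ⟨c, hc⟩ := hD hm
      refine ⟨-s * x + y * c, ?_⟩
      rw [hc]; push_cast
      linear_combination (3 * (x : R)) * hs
    · obtain ⟨y', rfl⟩ := hy hm
      refine ⟨-s * x - s * y' * φ Zsqrtd.sqrtd, ?_⟩
      push_cast
      linear_combination (3 * (x : R) + 3 * y' * φ Zsqrtd.sqrtd) * hs
  obtain ⟨X, hX⟩ := key
  rw [← hg] at hX
  refine ⟨17 * (512 * g) ^ 3, -(136 ^ 3 * g * X) + s * 279495 * g, ?_⟩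
  linear_combination (-(17 ^ 3 * 512 * g)) * hX - (3 * 279495 * g) * hs
end Z3
end Scholz

namespace Scholz
section Quad
set_option linter.unusedSectionVars false
variable {K : Type} [Field K] [NumberField K]

lemma quad_basis (h2 : Module.finrank ℚ K = 2) (δ : K) (hδ : ∀ q : ℚ, (q : K) ≠ δ) :
    ∃ b : Module.Basis (Fin 2) ℚ K, b 0 = 1 ∧ b 1 = δ := by
  have hli : LinearIndependent ℚ ![(1 : K), δ] := by
    rw [LinearIndependent.pair_iff]
    intro s t hst
    have ht : t = 0 := by
      by_contra ht
      apply hδ (-s / t)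
      have : (t : K) ≠ 0 := by exact_mod_cast ht
      push_cast
      rw [div_eq_iff this]
      simp only [Rat.smul_def] at hst
      linear_combination -hst
    refine ⟨?_, ht⟩
    rw [ht] at hst
    simpa using hst
  refine ⟨basisOfLinearIndependentOfCardEqFinrank hli (by simp [h2]), ?_, ?_⟩ <;> simp

lemma quad_tn (h2 : Module.finrank ℚ K = 2) (δ : K) (hδ : ∀ q : ℚ, (q : K) ≠ δ) (m : ℤ)
    (hm : δ ^ 2 = m) (x y : ℚ) :
    Algebra.trace ℚ K (x + y * δ) = 2 * x ∧ Algebra.norm ℚ ((x : K) + y * δ) = x ^ 2 - m * y ^ 2 := by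
  obtain ⟨b, b0, b1⟩ := quad_basis h2 δ hδ
  have hM : Algebra.leftMulMatrix b ((x : K) + y * δ) = !![x, m * y; y, x] := by
    have e0 : ((x : K) + y * δ) * b 0 = x • b 0 + y • b 1 := by
      rw [b0, b1]; simp only [Rat.smul_def]; ring
    have e1 : ((x : K) + y * δ) * b 1 = (m * y) • b 0 + x • b 1 := by
      rw [b0, b1]; simp only [Rat.smul_def]; push_cast
      linear_combination (y : K) * hm
    ext i j
    rw [Algebra.leftMulMatrix_eq_repr_mul]
    fin_cases j
    · simp only [Fin.zero_eta, e0]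
      fin_cases i <;> simp
    · simp only [Fin.mk_one, e1]
      fin_cases i <;> simp
  constructor
  · rw [Algebra.trace_eq_matrix_trace b, hM]
    simp [Matrix.trace]; ring
  · rw [Algebra.norm_eq_matrix_det b, hM]
    simp [Matrix.det_fin_two]; ring

lemma sqf_int (m : ℤ) (hm : Squarefree m) (y : ℚ) (N : ℤ) (h : (m : ℚ) * y ^ 2 = N) :
    ∃ B : ℤ, (B : ℚ) = y := by
  refine ⟨y.num, ?_⟩
  have h1 : y.den = 1 := by
    have hd : (y.den : ℤ) ^ 2 ∣ m := by
      have h3 : m * y.num ^ 2 = N * (y.den : ℤ) ^ 2 := by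
        have hy : (y.den : ℚ) ≠ 0 := by exact_mod_cast y.den_ne_zero
        have : (m : ℚ) * (y.num : ℚ) ^ 2 = N * (y.den : ℚ) ^ 2 := by
          rw [← h]
          have := Rat.mul_den_eq_num y
          rw [← this]; ring
        exact_mod_cast this
      have hc : IsCoprime ((y.den : ℤ) ^ 2) (y.num ^ 2) := by
        apply IsCoprime.pow
        rw [Int.isCoprime_iff_gcd_eq_one, Int.gcd_comm]
        exact y.reduced
      exact hc.dvd_of_dvd_mul_right ⟨N, by rw [h3]; ring⟩
    have := hm (y.den : ℤ) (by rwa [sq] at hd)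
    have := Int.isUnit_iff.1 this
    have hp := y.den_pos
    omega
  exact (Rat.den_eq_one_iff y).1 h1

lemma quad_int (h2 : Module.finrank ℚ K = 2) (δ : K) (hδ : ∀ q : ℚ, (q : K) ≠ δ) (m : ℤ)
    (hm : δ ^ 2 = m) (hsq : Squarefree m) (α : 𝓞 K) :
    ∃ A B : ℤ, 2 * (α : K) = A + B * δ ∧ 4 * Algebra.norm ℤ α = A ^ 2 - m * B ^ 2 := by
  obtain ⟨b, b0, b1⟩ := quad_basis h2 δ hδ
  have hα : ∃ x y : ℚ, (α : K) = x + y * δ := by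
    refine ⟨b.repr α 0, b.repr α 1, ?_⟩
    have := b.sum_repr (α : K)
    rw [Fin.sum_univ_two, b0, b1] at this
    simp only [Rat.smul_def, mul_one] at this
    exact this.symm
  obtain ⟨x, y, hxy⟩ := hα
  obtain ⟨ht, hn⟩ := quad_tn h2 δ hδ m hm x y
  rw [← hxy] at ht hn
  have ht' := Algebra.coe_trace_int α
  have hn' := Algebra.coe_norm_int α
  rw [ht] at ht'
  rw [hn] at hn'
  set A := Algebra.trace ℤ (𝓞 K) α
  set N := Algebra.norm ℤ α
  obtain ⟨B, hB⟩ := sqf_int m hsq (2 * y) (A ^ 2 - 4 * N) (by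
    push_cast
    rw [ht', hn']; ring)
  refine ⟨A, B, ?_, ?_⟩
  · have e1 : (A : K) = 2 * (x : K) := by exact_mod_cast congrArg (fun q : ℚ => (q : K)) ht'
    have e2 : (B : K) = 2 * (y : K) := by exact_mod_cast congrArg (fun q : ℚ => (q : K)) hB
    rw [e1, e2, hxy]; ring
  · have : (4 * N : ℚ) = A ^ 2 - m * B ^ 2 := by rw [ht', hn', hB]; ring
    exact_mod_cast this

lemma quad_rep (h2 : Module.finrank ℚ K = 2) (δ : K) (hδ : ∀ q : ℚ, (q : K) ≠ δ) (m : ℤ)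
    (hm : δ ^ 2 = m) (hsq : Squarefree m) (α : 𝓞 K) (a : Ideal (𝓞 K))
    (ha : Ideal.span {α} = a ^ 3) (h3 : a ⊔ Ideal.span {3} = ⊤) :
    ∃ (z : ℤ√m) (k : ℤ), 8 * (α : K) = z.re + z.im * δ ∧ z.norm = k ^ 3 ∧ ¬ (3 : ℤ) ∣ k := by
  obtain ⟨A, B, hAB, hN⟩ := quad_int h2 δ hδ m hm hsq α
  have hn : ∃ n : ℤ, Algebra.norm ℤ α = n ^ 3 := by
    have h := congrArg Ideal.absNorm ha
    rw [Ideal.absNorm_span_singleton, map_pow] at h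
    rcases Int.natAbs_eq (Algebra.norm ℤ α) with h' | h'
    · exact ⟨Ideal.absNorm a, by rw [h', h]; push_cast; ring⟩
    · exact ⟨-Ideal.absNorm a, by rw [h', h]; push_cast; ring⟩
  obtain ⟨n, hn⟩ := hn
  refine ⟨⟨4 * A, 4 * B⟩, 4 * n, ?_, ?_, ?_⟩
  · push_cast; linear_combination 4 * hAB
  · rw [Zsqrtd.norm_def]; simp only
    rw [mul_pow, ← hn]; linear_combination -16 * hN
  · intro hk
    have hk' : (3 : ℤ) ∣ Algebra.norm ℤ α := by
      rw [hn]; exact Dvd.dvd.pow (by omega) (by norm_num)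
    have hcop : Ideal.span {α} ⊔ Ideal.span {3} = ⊤ := by
      rw [ha]
      exact Ideal.pow_sup_eq_top h3
    obtain ⟨p, hp, q, hq, hpq⟩ := Submodule.mem_sup.1 ((Ideal.eq_top_iff_one _).1 hcop)
    obtain ⟨x, rfl⟩ := Ideal.mem_span_singleton'.1 hp
    obtain ⟨y, rfl⟩ := Ideal.mem_span_singleton'.1 hq
    obtain ⟨A', B', hAB', hN'⟩ := quad_int h2 δ hδ m hm hsq y
    have hx : (x * α : 𝓞 K) = 1 - y * 3 := by rw [← hpq]; ring
    have h5 : 4 * Algebra.norm ℚ ((x * α : 𝓞 K) : K) = (2 - 3 * A') ^ 2 - 9 * m * B' ^ 2 := by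
      have e : ((x * α : 𝓞 K) : K) = ((1 - 3 * A' / 2 : ℚ) : K) + ((-3 * B' / 2 : ℚ) : K) * δ := by
        rw [hx]
        push_cast
        simp only [map_ofNat]
        linear_combination (-3 / 2 : K) * hAB'
      rw [e, (quad_tn h2 δ hδ m hm _ _).2]
      ring
    rw [← Algebra.coe_norm_int, map_mul] at h5
    have h6 : 4 * (Algebra.norm ℤ x * Algebra.norm ℤ α) = (2 - 3 * A') ^ 2 - 9 * m * B' ^ 2 := by
      exact_mod_cast h5
    obtain ⟨t, ht⟩ := hk'
    rw [ht] at h6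
    have : (3 : ℤ) ∣ 4 := ⟨4 * Algebra.norm ℤ x * t + 4 * A' - 3 * A' ^ 2 + 3 * m * B' ^ 2, by
      linear_combination -h6⟩
    omega
end Quad
end Scholz

namespace Scholz
section KeyAux
set_option linter.unusedSectionVars false

lemma res_inv {L : Type} [Field L] [NumberField L] (Q : Ideal (𝓞 L)) (hQ : Q.IsPrime) (hQ0 : Q ≠ ⊥) :
    ∃ f : 𝓞 L → Fin 3, ∀ x y, x ∉ Q → y ∉ Q → f x = f y → ∃ v, x * y ^ 2 - v ^ 3 ∈ Q := by
  classical
  have hmax : Q.IsMaximal := hQ.isMaximal hQ0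
  have hfin : Finite (𝓞 L ⧸ Q) := Ideal.finiteQuotientOfFreeOfNeBot Q hQ0
  have hU : ∀ x, x ∉ Q → IsUnit (Ideal.Quotient.mk Q x) := by
    intro x hx
    obtain ⟨y, hy⟩ := Ideal.Quotient.exists_inv (I := Q) (a := Ideal.Quotient.mk Q x)
      (fun h => hx (Ideal.Quotient.eq_zero_iff_mem.1 h))
    exact IsUnit.of_mul_eq_one _ hy
  have hc := cyc_card (G := (𝓞 L ⧸ Q)ˣ)
  set G := (𝓞 L ⧸ Q)ˣ
  have hfinG : Finite (G ⧸ (cb G).range) := inferInstance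
  obtain ⟨e⟩ : Nonempty ((G ⧸ (cb G).range) ↪ Fin 3) := by
    have := Fintype.ofFinite (G ⧸ (cb G).range)
    rw [Nat.card_eq_fintype_card] at hc
    exact Function.Embedding.nonempty_of_card_le (by simpa using hc)
  refine ⟨fun x => if h : x ∉ Q then e (QuotientGroup.mk (hU x h).unit) else 0, ?_⟩
  intro x y hx hy h
  simp only [hx, hy, not_false_eq_true, dif_pos] at h
  have h1 := QuotientGroup.eq.1 (e.injective h)
  obtain ⟨w, hw⟩ := h1
  rw [cb_apply, eq_inv_mul_iff_mul_eq] at hw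
  have hw' : Ideal.Quotient.mk Q x * (w : 𝓞 L ⧸ Q) ^ 3 = Ideal.Quotient.mk Q y :=
    congrArg Units.val hw
  obtain ⟨w0, hw0⟩ := Ideal.Quotient.mk_surjective (w : 𝓞 L ⧸ Q)
  refine ⟨x * w0 ^ 2, ?_⟩
  rw [← Ideal.Quotient.eq_zero_iff_mem]
  simp only [map_sub, map_mul, map_pow]
  rw [hw0, ← hw']
  ring

lemma exists_Q {F L : Type} [Field F] [Field L] [NumberField F] [NumberField L] [Algebra F L]
    (p : Ideal (𝓞 F)) (hp : p.IsPrime) (hp0 : p ≠ ⊥) (h3 : p ⊔ Ideal.span {3} = ⊤) :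
    ∃ Q : Ideal (𝓞 L), Q.IsPrime ∧ Q ≠ ⊥ ∧ Q.under (𝓞 F) = p ∧ 3 ∉ Q := by
  have hmax : p.IsMaximal := hp.isMaximal hp0
  obtain ⟨Q, hQ, hQp⟩ := Ideal.exists_maximal_ideal_liesOver_of_isIntegral (S := 𝓞 L) p
  have hu : Q.under (𝓞 F) = p := (Ideal.LiesOver.over (P := Q) (p := p)).symm
  refine ⟨Q, hQ.isPrime, Ideal.ne_bot_of_liesOver_of_ne_bot hp0 Q, hu, ?_⟩
  intro h
  have h3p : (3 : 𝓞 F) ∈ p := by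
    rw [← hu, Ideal.mem_comap]
    have e : algebraMap (𝓞 F) (𝓞 L) 3 = 3 := map_ofNat _ 3
    rw [e]; exact h
  apply hp.ne_top
  rw [← h3, eq_comm, sup_eq_left]
  exact (Ideal.span_singleton_le_iff_mem _).2 h3p

lemma not_mem_of_sup {R : Type*} [CommRing R] (a P : Ideal R) (α : R) (ha : Ideal.span {α} = a ^ 3)
    (hP : P ≠ ⊤) (h : a ⊔ P = ⊤) : α ∉ P := by
  intro hα
  apply hP
  have h1 : a ^ 3 ⊔ P = ⊤ := Ideal.pow_sup_eq_top h
  rw [← ha, sup_eq_right.2 ((Ideal.span_singleton_le_iff_mem _).2 hα)] at h1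
  exact h1

lemma ideal_gen {R : Type*} [CommRing R] [IsDedekindDomain R] (c : ClassGroup R) (hc : c ^ 3 = 1)
    (J : Ideal R) (hJ : J ≠ ⊥) : ∃ (a : (Ideal R)⁰) (α : R), ClassGroup.mk0 a = c ∧ a.1 ⊔ J = ⊤ ∧
      Ideal.span {α} = a.1 ^ 3 ∧ α ≠ 0 := by
  obtain ⟨a, hac, haJ⟩ := coprime_rep c J hJ
  have h1 : ClassGroup.mk0 (a ^ 3) = 1 := by rw [map_pow, hac, hc]
  rw [ClassGroup.mk0_eq_one_iff] at h1
  obtain ⟨α, hα⟩ := h1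
  refine ⟨a, α, hac, haJ, hα.symm, ?_⟩
  rintro rfl
  have : (a ^ 3 : (Ideal R)⁰).1 ≠ ⊥ := nonZeroDivisors.ne_zero (a ^ 3 : (Ideal R)⁰).2
  apply this
  rw [hα]
  simp

/-- no cube in `L` -/
lemma not_cube {F' L : Type} [Field F'] [Field L] [NumberField F'] [NumberField L] [Algebra F' L]
    (hFL' : Module.finrank F' L = 2) (g : 𝓞 F') (hg : g ≠ 0) (a : (Ideal (𝓞 F'))⁰)
    (ha : Ideal.span {g} = a.1 ^ 3) (hc : ClassGroup.mk0 a ≠ 1) (x : L) :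
    x ^ 3 ≠ algebraMap F' L g := by
  intro hx
  have h1 := congrArg (Algebra.norm F') hx
  rw [map_pow, Algebra.norm_algebraMap, hFL'] at h1
  set μ := Algebra.norm F' x
  have hg' : (g : F') ≠ 0 := by simpa using hg
  have hμ : μ ≠ 0 := by
    intro h; rw [h] at h1
    exact hg' (pow_eq_zero_iff (n := 2) (by norm_num) |>.1 (by rw [← h1]; ring))
  have h2 : ((g : F') / μ) ^ 3 = g := by
    rw [div_pow, h1]; field_simp
  have hint : IsIntegral ℤ ((g : F') / μ) := by
    apply IsIntegral.of_pow (n := 3) (by norm_num)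
    rw [h2]; exact g.2
  obtain ⟨β, hβ⟩ : ∃ β : 𝓞 F', (β : F') = g / μ := ⟨⟨_, hint⟩, rfl⟩
  have h3 : β ^ 3 = g := by
    apply RingOfIntegers.ext
    change (β : F') ^ 3 = g
    rw [hβ, h2]
  rw [← h3, ← Ideal.span_singleton_pow] at ha
  apply hc
  rw [ClassGroup.mk0_eq_one_iff, ← cube_inj ha]
  exact ⟨⟨β, rfl⟩⟩
end KeyAux
end Scholz

namespace Scholz
section KeyThm
set_option linter.unusedSectionVars false
variable {F F' L : Type} [Field F] [Field F'] [Field L] [NumberField F] [NumberField F']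
  [NumberField L] [Algebra F L] [Algebra F' L]

lemma int_coe (x : 𝓞 F') : ((algebraMap (𝓞 F') (𝓞 L) x : 𝓞 L) : L) = algebraMap F' L x := rfl

lemma pair_contra (hFL : Module.finrank F L = 2) (hFL' : Module.finrank F' L = 2)
    (ζ : 𝓞 L) (hζ : ζ ^ 2 + ζ + 1 = 0)
    (hL : IntermediateField.adjoin F {(ζ : L)} = ⊤)
    (δ : F') (m : ℤ) (hm : δ ^ 2 = m)
    (c0 : F) (hc0 : algebraMap F' L δ = algebraMap F L c0 * (ζ - (ζ : L) ^ 2))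
    (a a' : (Ideal (𝓞 F'))⁰) (α α' : 𝓞 F') (hα : Ideal.span {α} = a.1 ^ 3)
    (hα' : Ideal.span {α'} = a'.1 ^ 3) (h0 : α ≠ 0) (h0' : α' ≠ 0)
    (h3 : a.1 ⊔ Ideal.span {3} = ⊤) (h3' : a'.1 ⊔ Ideal.span {3} = ⊤)
    (z z' : ℤ√m) (k k' : ℤ) (hz : 8 * (α : F') = z.re + z.im * δ)
    (hz' : 8 * (α' : F') = z'.re + z'.im * δ) (hn : z.norm = k ^ 3) (hn' : z'.norm = k' ^ 3)
    (hk : ¬ (3 : ℤ) ∣ k) (hk' : ¬ (3 : ℤ) ∣ k') (hinv : inv0 z = inv0 z')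
    (hcl : ClassGroup.mk0 (a * a' ^ 2) ≠ 1)
    (hgen : Subgroup.closure {c : ClassGroup (𝓞 F) | ∃ p : (Ideal (𝓞 F))⁰, p.1.IsPrime ∧
      ClassGroup.mk0 p = c ∧ ∃ Q : Ideal (𝓞 L), Q.IsPrime ∧ Q ≠ ⊥ ∧ Q.under (𝓞 F) = p.1 ∧
        3 ∉ Q ∧ algebraMap (𝓞 F') (𝓞 L) (α * α' ^ 2) ∉ Q ∧
        ∃ v, algebraMap (𝓞 F') (𝓞 L) (α * α' ^ 2) - v ^ 3 ∈ Q} ⊔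
        (cb (ClassGroup (𝓞 F))).range = ⊤) : False := by
  have hζL : (ζ : L) ^ 2 + ζ + 1 = 0 := congrArg (fun x : 𝓞 L => (x : L)) hζ
  have hs2 : ((ζ : L) - (ζ : L) ^ 2) ^ 2 = -3 := by
    linear_combination ((ζ : L) ^ 2 - 3 * ζ + 3) * hζL
  have hs2' : (ζ - ζ ^ 2) ^ 2 = -3 := by
    linear_combination (ζ ^ 2 - 3 * ζ + 3) * hζ
  have hc02 : 3 * c0 ^ 2 = -(m : F) := by
    apply (algebraMap F L).injective
    have h1 : (algebraMap F' L δ) ^ 2 = (algebraMap F L c0 * (ζ - (ζ : L) ^ 2)) ^ 2 := by rw [hc0]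
    rw [mul_pow, hs2, ← map_pow, hm, map_intCast] at h1
    simp only [map_mul, map_pow, map_neg, map_ofNat, map_intCast]
    linear_combination h1
  have hδi : IsIntegral ℤ δ := by
    apply IsIntegral.of_pow (n := 2) (by norm_num)
    rw [hm]; exact isIntegral_algebraMap
  obtain ⟨δi, hδi⟩ : ∃ x : 𝓞 F', (x : F') = δ := ⟨⟨δ, hδi⟩, rfl⟩
  have hδ2 : δi * δi = (m : 𝓞 F') := by
    apply RingOfIntegers.ext
    change (δi : F') * δi = ((m : 𝓞 F') : F')
    rw [hδi, ← sq, hm]; simp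
  set ψ : ℤ√m →+* 𝓞 F' := Zsqrtd.lift ⟨δi, hδ2⟩ with hψ
  have hψa : ∀ w : ℤ√m, ((ψ w : 𝓞 F') : F') = w.re + w.im * δ := by
    intro w
    rw [← hδi]
    simp [hψ, Zsqrtd.lift]
  have e1 : 8 * α = ψ z := by
    apply RingOfIntegers.ext
    rw [hψa, ← hz]; rfl
  have e1' : 8 * α' = ψ z' := by
    apply RingOfIntegers.ext
    rw [hψa, ← hz']; rfl
  have e2 : 512 * (α * α' ^ 2) = ψ (z * z' ^ 2) := by
    rw [map_mul, map_pow, ← e1, ← e1']; ring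
  set w := z * z' ^ 2 with hw
  have hwn : w.re ^ 2 - m * w.im ^ 2 = (k * k' ^ 2) ^ 3 := by
    have : w.norm = (k * k' ^ 2) ^ 3 := by
      have : w.norm = z.norm * z'.norm ^ 2 := by
        change Zsqrtd.normMonoidHom (z * z' ^ 2) = _
        rw [map_mul, map_pow]; rfl
      rw [this, hn, hn']; ring
    rw [← this, Zsqrtd.norm_def]; ring
  set γ := algebraMap (𝓞 F') (𝓞 L) (α * α' ^ 2) with hγ
  have hinj : Function.Injective (algebraMap (𝓞 F') (𝓞 L)) := 
    FaithfulSMul.algebraMap_injective _ _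
  have hg0 : α * α' ^ 2 ≠ 0 := mul_ne_zero h0 (pow_ne_zero _ h0')
  have hspan : Ideal.span {α * α' ^ 2} = (a * a' ^ 2 : (Ideal (𝓞 F'))⁰).1 ^ 3 := by
    rw [← Ideal.span_singleton_mul_span_singleton, ← Ideal.span_singleton_pow, hα, hα']
    change _ = (a.1 * a'.1 ^ 2) ^ 3
    ring
  obtain ⟨u, v, huv⟩ : ∃ u v, γ - u ^ 3 = 3 * (ζ - ζ ^ 2) * v := by
    apply at3_ring ((algebraMap (𝓞 F') (𝓞 L)).comp ψ) (ζ - ζ ^ 2) hs2' ?_ z z' k k' hk hk' hn hn' hinv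
    · rw [RingHom.comp_apply, ← hw, ← e2, map_mul, map_ofNat]
    · rintro ⟨m', hm'⟩
      have hci : IsIntegral ℤ (algebraMap F L c0) := by
        apply IsIntegral.of_pow (n := 2) (by norm_num)
        have : c0 ^ 2 = -(m' : F) := by
          rw [hm'] at hc02; push_cast at hc02
          have h3 : (3 : F) ≠ 0 := by norm_num
          apply mul_left_cancel₀ h3
          rw [hc02]; ring
        rw [← map_pow, this, map_neg, map_intCast]
        exact (isIntegral_algebraMap (R := ℤ) (x := m')).neg
      refine ⟨⟨_, hci⟩, ?_⟩
      apply RingOfIntegers.ext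
      change algebraMap F' L ((ψ Zsqrtd.sqrtd : 𝓞 F') : F') = algebraMap F L c0 * (ζ - (ζ : L) ^ 2)
      rw [hψa, ← hc0]
      simp
  refine no_gamma hFL ζ γ hζ ((w.re : F) / 512) ((w.im : F) * c0 / 512) ((k * k' ^ 2 : F) / 64)
    ?_ ?_ ?_ ?_ hL ?_ ((a.1 * a'.1 ^ 2).map (algebraMap (𝓞 F') (𝓞 L))) ?_ u v huv ?_ hgen
  · have h5 := congrArg (fun x : 𝓞 F' => algebraMap F' L (x : F')) e2
    simp only [hψa] at h5
    rw [map_add, map_mul, hc0] at h5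
    have h6 : algebraMap F' L ((512 * (α * α' ^ 2) : 𝓞 F') : F') = 512 * (γ : L) := by
      rw [hγ, int_coe]
      rw [← map_ofNat (algebraMap F' L) 512, ← map_mul]; rfl
    rw [h6] at h5
    simp only [map_mul, map_div₀, map_intCast, map_ofNat] at h5 ⊢
    have : (512 : L) ≠ 0 := by norm_num
    apply mul_left_cancel₀ this
    rw [h5]; field_simp
  · have h5 : (w.re : F) ^ 2 - m * (w.im : F) ^ 2 = ((k : F) * k' ^ 2) ^ 3 := by exact_mod_cast hwn
    linear_combination (1 / 512 ^ 2 : F) * h5 + (w.im : F) ^ 2 / 512 ^ 2 * hc02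
  · have hk0 : (k : F) ≠ 0 := by
      intro h; apply hk; rw [Int.cast_eq_zero.1 h]; exact dvd_zero _
    have hk0' : (k' : F) ≠ 0 := by
      intro h; apply hk'; rw [Int.cast_eq_zero.1 h]; exact dvd_zero _
    exact div_ne_zero (mul_ne_zero hk0 (pow_ne_zero _ hk0')) (by norm_num)
  · rw [hγ]
    intro h
    exact hg0 (hinj (by rw [h, map_zero]))
  · intro x
    exact not_cube hFL' _ hg0 (a * a' ^ 2) hspan hcl x
  · rw [hγ, ← Ideal.map_pow, ← Set.image_singleton, ← Ideal.map_span, hspan]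
    rfl
  · intro Q hQ h3Q hγQ
    rw [hγ, map_mul, map_pow] at hγQ
    have aux : ∀ (b : Ideal (𝓞 F')) (β : 𝓞 F'), Ideal.span {β} = b ^ 3 → b ⊔ Ideal.span {3} = ⊤ →
        algebraMap (𝓞 F') (𝓞 L) β ∉ Q := by
      intro b β hb hb3 hβ
      refine not_mem_of_sup b (Q.under (𝓞 F')) β hb ?_ ?_ hβ
      · exact (Ideal.IsPrime.under (𝓞 F') Q).ne_top
      · rw [eq_top_iff, ← hb3]
        refine sup_le_sup_left ?_ _
        rw [Ideal.span_singleton_le_iff_mem]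
        change algebraMap (𝓞 F') (𝓞 L) 3 ∈ Q
        have e : algebraMap (𝓞 F') (𝓞 L) 3 = 3 := map_ofNat _ 3
        rw [e]; exact h3Q
    rcases hQ.mem_or_mem hγQ with h | h
    · exact aux _ _ hα h3 h
    · exact aux _ _ hα' h3' (hQ.mem_of_pow_mem _ h)

theorem key (hFL : Module.finrank F L = 2) (hFL' : Module.finrank F' L = 2)
    (hF' : Module.finrank ℚ F' = 2)
    (ζ : 𝓞 L) (hζ : ζ ^ 2 + ζ + 1 = 0)
    (hL : IntermediateField.adjoin F {(ζ : L)} = ⊤)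
    (δ : F') (hδ : ∀ q : ℚ, (q : F') ≠ δ) (m : ℤ) (hm : δ ^ 2 = m) (hsq : Squarefree m)
    (c0 : F) (hc0 : algebraMap F' L δ = algebraMap F L c0 * (ζ - (ζ : L) ^ 2)) :
    Nat.card {c : ClassGroup (𝓞 F') // c ^ 3 = 1} ≤
      3 * Nat.card {c : ClassGroup (𝓞 F) // c ^ 3 = 1} := by
  classical
  by_contra! hlt
  have hF30 : (Ideal.span {(3 : 𝓞 F)}) ≠ ⊥ := by simp
  have hF30' : (Ideal.span {(3 : 𝓞 F')}) ≠ ⊥ := by simp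
  obtain ⟨T, hTS, hTg, hTc⟩ := pick {c : ClassGroup (𝓞 F) | ∃ p : (Ideal (𝓞 F))⁰, p.1.IsPrime ∧
      ClassGroup.mk0 p = c ∧ p.1 ⊔ Ideal.span {3} = ⊤} _ (cb (ClassGroup (𝓞 F))).range rfl le_rfl
      (by rw [primes_gen _ hF30, top_sup_eq])
  rw [cb_index] at hTc
  have hQ : ∀ t : T, ∃ Q : Ideal (𝓞 L), Q.IsPrime ∧ Q ≠ ⊥ ∧ 3 ∉ Q ∧ ∃ p : (Ideal (𝓞 F))⁰, p.1.IsPrime ∧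
      ClassGroup.mk0 p = t.1 ∧ Q.under (𝓞 F) = p.1 := by
    intro t
    obtain ⟨p, hp, hpt, hp3⟩ := hTS t.2
    obtain ⟨Q, h1, h2, h3, h4⟩ := exists_Q (L := L) p.1 hp (nonZeroDivisors.ne_zero p.2) hp3
    exact ⟨Q, h1, h2, h4, p, hp, hpt, h3⟩
  choose Q hQp hQ0 hQ3 hQu using hQ
  have hf : ∀ t : T, _ := fun t => res_inv (Q t) (hQp t) (hQ0 t)
  choose f hf using hf
  set J : Ideal (𝓞 F') := Ideal.span {3} * ∏ t : T, (Q t).under (𝓞 F') with hJ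
  have hJ0 : J ≠ ⊥ := by
    apply mul_ne_zero hF30'
    rw [Finset.prod_ne_zero_iff]
    intro t _
    exact Ideal.under_ne_bot (𝓞 F') (hQ0 t)
  have hJ3 : J ≤ Ideal.span {3} := Ideal.mul_le_left
  have hJQ : ∀ t, J ≤ (Q t).under (𝓞 F') := fun t =>
    Ideal.mul_le_right.trans (Ideal.le_of_dvd (Finset.dvd_prod_of_mem _ (Finset.mem_univ t)))
  have hC : ∀ c : {c : ClassGroup (𝓞 F') // c ^ 3 = 1}, ∃ (a : (Ideal (𝓞 F'))⁰) (α : 𝓞 F') (z : ℤ√m)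
      (k : ℤ), ClassGroup.mk0 a = c.1 ∧ a.1 ⊔ Ideal.span {3} = ⊤ ∧ Ideal.span {α} = a.1 ^ 3 ∧ α ≠ 0 ∧
      (∀ t, algebraMap (𝓞 F') (𝓞 L) α ∉ Q t) ∧ 8 * (α : F') = z.re + z.im * δ ∧
      z.norm = k ^ 3 ∧ ¬ (3 : ℤ) ∣ k := by
    intro c
    obtain ⟨a, α, hac, haJ, hα, hα0⟩ := ideal_gen c.1 c.2 J hJ0
    have h3 : a.1 ⊔ Ideal.span {3} = ⊤ := top_le_iff.1 (haJ ▸ sup_le_sup_left hJ3 _)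
    obtain ⟨z, k, hz, hn, hk⟩ := quad_rep hF' δ hδ m hm hsq α a.1 hα h3
    refine ⟨a, α, z, k, hac, h3, hα, hα0, ?_, hz, hn, hk⟩
    intro t
    have := hQp t
    exact not_mem_of_sup a.1 ((Q t).under (𝓞 F')) α hα (Ideal.IsPrime.under (𝓞 F') (Q t)).ne_top
      (top_le_iff.1 (haJ ▸ sup_le_sup_left (hJQ t) _))
  choose a α z k hac h3 hα h0 hαQ hz hn hk using hC
  have hfin := Fintype.ofFinite {c : ClassGroup (𝓞 F') // c ^ 3 = 1}
  obtain ⟨c, c', hne, hcc⟩ := Fintype.exists_ne_map_eq_of_card_lt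
    (fun c : {c : ClassGroup (𝓞 F') // c ^ 3 = 1} =>
      ((fun t : T => f t (algebraMap (𝓞 F') (𝓞 L) (α c)), inv0 (z c)) : (T → Fin 3) × ZMod 3)) (by
      rw [Fintype.card_prod, Fintype.card_fun, Fintype.card_fin, ZMod.card, Fintype.card_coe,
        ← Nat.card_eq_fintype_card]
      calc 3 ^ T.card * 3 ≤ Nat.card {c : ClassGroup (𝓞 F) // c ^ 3 = 1} * 3 :=
            Nat.mul_le_mul_right _ hTc
        _ < _ := by rw [mul_comm]; exact hlt)
  obtain ⟨hcf, hcz⟩ := Prod.ext_iff.1 hcc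
  simp only at hcf hcz
  refine pair_contra hFL hFL' ζ hζ hL δ m hm c0 hc0 (a c) (a c') (α c) (α c') (hα c) (hα c') (h0 c)
    (h0 c') (h3 c) (h3 c') (z c) (z c') (k c) (k c') (hz c) (hz c') (hn c) (hn c') (hk c) (hk c') hcz
    ?_ ?_
  · rw [map_mul, map_pow, hac, hac]
    intro h
    apply hne
    apply Subtype.ext
    have := c'.2
    calc c.1 = c.1 * c'.1 ^ 3 := by rw [c'.2, mul_one]
      _ = (c.1 * c'.1 ^ 2) * c'.1 := by rw [mul_assoc, ← pow_succ]
      _ = c'.1 := by rw [h, one_mul]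
  · rw [eq_top_iff, ← hTg]
    refine sup_le_sup_right (Subgroup.closure_mono ?_) _
    intro t ht
    obtain ⟨p, hp, hpt, hpu⟩ := hQu ⟨t, ht⟩
    refine ⟨p, hp, hpt, Q ⟨t, ht⟩, hQp _, hQ0 _, hpu, hQ3 _, ?_, ?_⟩
    · rw [map_mul, map_pow]
      intro h
      rcases (hQp _).mem_or_mem h with h | h
      · exact hαQ c _ h
      · exact hαQ c' _ ((hQp _).mem_of_pow_mem _ h)
    · rw [map_mul, map_pow]
      exact hf _ _ _ (hαQ c _) (hαQ c' _) (congrFun hcf _)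
end KeyThm
end Scholz

namespace Scholz
section Asm
set_option linter.unusedSectionVars false

lemma fr2 {K E : Type*} [Field K] [Field E] [Algebra K E] (x : E) (c : K)
    (hx : x ^ 2 = algebraMap K E c) (hn : ∀ q : K, algebraMap K E q ≠ x) :
    IsIntegral K x ∧ Module.finrank K (IntermediateField.adjoin K {x}) = 2 := by
  have hmon : (Polynomial.X ^ 2 - Polynomial.C c : Polynomial K).Monic :=
    Polynomial.monic_X_pow_sub_C c (by norm_num)
  have hroot : Polynomial.aeval x (Polynomial.X ^ 2 - Polynomial.C c : Polynomial K) = 0 := by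
    simp [hx]
  have hint : IsIntegral K x := ⟨_, hmon, hroot⟩
  refine ⟨hint, ?_⟩
  rw [IntermediateField.adjoin.finrank hint]
  apply le_antisymm
  · have := Polynomial.natDegree_le_of_dvd (minpoly.dvd K x hroot) hmon.ne_zero
    rwa [Polynomial.natDegree_X_pow_sub_C] at this
  · rw [minpoly.two_le_natDegree_iff hint]
    rintro ⟨q, hq⟩
    exact hn q hq

variable {F F' L : Type} [Field F] [Field F'] [Field L] [NumberField F] [NumberField F']
  [NumberField L] [Algebra F L] [Algebra F' L]

lemma side (x : F) (y : F') (n : ℤ) (hx : x ^ 2 = n)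
    (hxq : ∀ q : ℚ, (q : F) ≠ x) (hyq : ∀ q : ℚ, (q : F') ≠ y)
    (h2 : Module.finrank ℚ F = 2) (h2' : Module.finrank ℚ F' = 2) (r : ℚ)
    (s ζ : L) (hs : s ^ 2 = -3) (hxy : algebraMap F L x * algebraMap F' L y = r * s)
    (hζ : 2 * ζ + 1 = s)
    (hgen : ∀ K : IntermediateField F L, (∀ b : F', algebraMap F' L b ∈ K) → K = ⊤) :
    IntermediateField.adjoin F {ζ} = ⊤ ∧ Module.finrank F L = 2 := by
  have hx0 : x ≠ 0 := fun h => hxq 0 (by simp [h])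
  have hx0' : algebraMap F L x ≠ 0 := by simpa using hx0
  have hy' : algebraMap F' L y = r * s / algebraMap F L x := by
    rw [eq_div_iff hx0', ← hxy]; ring
  have hfull : ∀ K : IntermediateField F L, s ∈ K → K = ⊤ := by
    intro K hsK
    apply hgen
    obtain ⟨b, b0, b1⟩ := quad_basis h2' y hyq
    intro t
    have ht := b.sum_repr t
    rw [Fin.sum_univ_two, b0, b1] at ht
    rw [← ht]
    simp only [Rat.smul_def, map_add, map_mul, map_ratCast, mul_one]
    have hq : ∀ q : ℚ, (q : L) ∈ K := fun q => by
      have := K.algebraMap_mem (q : F)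
      rwa [map_ratCast] at this
    refine K.add_mem (hq _) (K.mul_mem (hq _) ?_)
    rw [hy']
    exact K.div_mem (K.mul_mem (hq _) hsK) (K.algebraMap_mem _)
  have hsF : ∀ t : F, algebraMap F L t ≠ s := by
    intro t ht
    have ht2 : t ^ 2 = -3 := by
      apply (algebraMap F L).injective
      rw [map_pow, ht, hs, map_neg, map_ofNat]
    obtain ⟨b, b0, b1⟩ := quad_basis h2 x hxq
    have hb := b.sum_repr t
    rw [Fin.sum_univ_two, b0, b1] at hb
    simp only [Rat.smul_def, mul_one] at hb
    set a := b.repr t 0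
    set c := b.repr t 1
    have hq : ((a ^ 2 + c ^ 2 * n + 3 : ℚ) : F) + ((2 * a * c : ℚ) : F) * x = 0 := by
      push_cast
      rw [← hb] at ht2
      linear_combination ht2 - (c : F) ^ 2 * hx
    have hac : 2 * a * c = 0 := by
      by_contra h
      apply hxq (-(a ^ 2 + c ^ 2 * n + 3) / (2 * a * c))
      have h' : ((2 * a * c : ℚ) : F) ≠ 0 := by exact_mod_cast h
      rw [Rat.cast_div, div_eq_iff h', Rat.cast_neg]
      linear_combination -hq
    rcases mul_eq_zero.1 hac with h | h
    · have ha : a = 0 := by linarith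
      apply hyq (r * c)
      apply (algebraMap F' L).injective
      rw [hy', ← ht, ← hb, ha]
      simp only [map_mul, map_ratCast, Rat.cast_zero, zero_add]
      push_cast
      field_simp
    · rw [h] at hb
      have : ((a ^ 2 : ℚ) : F) = ((-3 : ℚ) : F) := by
        push_cast
        rw [← ht2, ← hb]; simp
      have := Rat.cast_injective this
      nlinarith [sq_nonneg a]
  constructor
  · apply hfull
    rw [← hζ]
    have hz := IntermediateField.mem_adjoin_simple_self F ζ
    exact IntermediateField.add_mem _ (by rw [two_mul]; exact IntermediateField.add_mem _ hz hz)
      (IntermediateField.one_mem _)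
  · have h := (fr2 s (-3 : F) (by rw [hs, map_neg, map_ofNat]) hsF).2
    rw [hfull _ (IntermediateField.mem_adjoin_simple_self F s)] at h
    rw [← h]
    exact IntermediateField.finrank_top'.symm

lemma half_abs (x : F) (y : F') (n m : ℤ) (hx : x ^ 2 = n) (hy : y ^ 2 = m) (hsq : Squarefree m)
    (hxq : ∀ q : ℚ, (q : F) ≠ x) (hyq : ∀ q : ℚ, (q : F') ≠ y)
    (h2 : Module.finrank ℚ F = 2) (h2' : Module.finrank ℚ F' = 2) (r : ℚ)
    (s : L) (hs : s ^ 2 = -3) (hxy : algebraMap F L x * algebraMap F' L y = r * s)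
    (hgen : ∀ K : IntermediateField F L, (∀ b : F', algebraMap F' L b ∈ K) → K = ⊤)
    (hgen' : ∀ K : IntermediateField F' L, (∀ b : F, algebraMap F L b ∈ K) → K = ⊤) :
    Nat.card {c : ClassGroup (𝓞 F') // c ^ 3 = 1} ≤
      3 * Nat.card {c : ClassGroup (𝓞 F) // c ^ 3 = 1} := by
  set ζ : L := (s - 1) / 2 with hζ
  have hζs : 2 * ζ + 1 = s := by rw [hζ]; ring
  have hζ1 : ζ ^ 2 + ζ + 1 = 0 := by rw [hζ]; linear_combination (1 / 4 : L) * hs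
  have hζi : IsIntegral ℤ ζ := by
    apply IsIntegral.of_pow (n := 3) (by norm_num)
    have : ζ ^ 3 = 1 := by linear_combination (ζ - 1) * hζ1
    rw [this]; exact isIntegral_one
  obtain ⟨A, B⟩ := side x y n hx hxq hyq h2 h2' r s ζ hs hxy hζs hgen
  obtain ⟨A', B'⟩ := side y x m hy hyq hxq h2' h2 r s ζ hs (by rw [mul_comm]; exact hxy) hζs hgen'
  have hx0 : x ≠ 0 := fun h => hxq 0 (by simp [h])
  have hx0' : algebraMap F L x ≠ 0 := by simpa using hx0
  refine key B B' h2' ⟨ζ, hζi⟩ (RingOfIntegers.ext hζ1) A y hyq m hy hsq (r / x) ?_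
  change algebraMap F' L y = algebraMap F L (r / x) * (ζ - ζ ^ 2)
  have : ζ - ζ ^ 2 = s := by linear_combination -hζ1 + hζs
  rw [this, map_div₀, map_ratCast]
  rw [div_mul_eq_mul_div, eq_div_iff hx0', ← hxy]; ring

lemma gen_sup (F F' : IntermediateField ℚ ℂ) (K : Subfield ↥(F ⊔ F'))
    (h1 : ∀ b : F, (⟨b.1, le_sup_left (b := F') b.2⟩ : ↥(F ⊔ F')) ∈ K)
    (h2 : ∀ b : F', (⟨b.1, le_sup_right (a := F) b.2⟩ : ↥(F ⊔ F')) ∈ K) (z : ↥(F ⊔ F')) : z ∈ K := by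
  have hle : F ⊔ F' ≤ (K.map (F ⊔ F').val.toRingHom).toIntermediateField
      (fun q => ⟨algebraMap ℚ ↥(F ⊔ F') q, by
        have : algebraMap ℚ ↥(F ⊔ F') q = ⟨(algebraMap ℚ F q).1, le_sup_left (b := F') (algebraMap ℚ F q).2⟩ := rfl
        rw [this]; exact h1 _, rfl⟩) := by
    apply sup_le
    · intro b hb
      exact ⟨_, h1 ⟨b, hb⟩, rfl⟩
    · intro b hb
      exact ⟨_, h2 ⟨b, hb⟩, rfl⟩
  obtain ⟨k, hk, hkz⟩ := hle z.2
  have : k = z := Subtype.ext hkz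
  rw [← this]; exact hk

lemma half (F F' : IntermediateField ℚ ℂ) (h2 : Module.finrank ℚ F = 2)
    (h2' : Module.finrank ℚ F' = 2) (x y : ℂ) (hxF : x ∈ F) (hyF : y ∈ F')
    (n m : ℤ) (hx : x ^ 2 = n) (hy : y ^ 2 = m) (hsq : Squarefree m)
    (hxq : ∀ q : ℚ, (q : ℂ) ≠ x) (hyq : ∀ q : ℚ, (q : ℂ) ≠ y) (r : ℚ) (hr : r ≠ 0)
    (s : ℂ) (hs : s ^ 2 = -3) (hxy : x * y = r * s) :
    Nat.card {c : ClassGroup (𝓞 F') // c ^ 3 = 1} ≤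
      3 * Nat.card {c : ClassGroup (𝓞 F) // c ^ 3 = 1} := by
  have i1 : FiniteDimensional ℚ F := Module.finite_of_finrank_pos (by omega)
  have i2 : FiniteDimensional ℚ F' := Module.finite_of_finrank_pos (by omega)
  have i3 : NumberField F := ⟨⟩
  have i4 : NumberField F' := ⟨⟩
  set L := F ⊔ F' with hL
  have i5 : FiniteDimensional ℚ L := IntermediateField.finiteDimensional_sup F F'
  have i6 : NumberField L := ⟨⟩
  have l1 : F ≤ L := le_sup_left
  have l2 : F' ≤ L := le_sup_right
  let a1 : Algebra F L := (IntermediateField.inclusion l1).toRingHom.toAlgebra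
  let a2 : Algebra F' L := (IntermediateField.inclusion l2).toRingHom.toAlgebra
  have hsL : s ∈ L := by
    have : s = x * y / (r : ℂ) := by
      have : (r : ℂ) ≠ 0 := by exact_mod_cast hr
      rw [hxy]; field_simp
    rw [this]
    refine L.div_mem (L.mul_mem (l1 hxF) (l2 hyF)) ?_
    exact L.algebraMap_mem r
  have e1 : ∀ b : F, ((algebraMap F L b : L) : ℂ) = b := fun _ => rfl
  have e2 : ∀ b : F', ((algebraMap F' L b : L) : ℂ) = b := fun _ => rfl
  refine half_abs (F := F) (F' := F') (L := L) ⟨x, hxF⟩ ⟨y, hyF⟩ n m ?_ ?_ hsq ?_ ?_ h2 h2' r ⟨s, hsL⟩ ?_ ?_ ?_ ?_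
  · apply Subtype.ext; push_cast; exact hx
  · apply Subtype.ext; push_cast; exact hy
  · intro q hq; apply hxq q; have := congrArg Subtype.val hq; simpa using this
  · intro q hq; apply hyq q; have := congrArg Subtype.val hq; simpa using this
  · apply Subtype.ext; push_cast; exact hs
  · apply Subtype.ext; push_cast; exact hxy
  · intro K hK
    rw [eq_top_iff]
    intro z _
    exact gen_sup F F' K.toSubfield (fun b => K.algebraMap_mem b) hK z
  · intro K hK
    rw [eq_top_iff]
    intro z _
    exact gen_sup F F' K.toSubfield hK (fun b => K.algebraMap_mem b) z
end Asm
end Scholz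
namespace Scholz
section Final

lemma not_sq (m : ℤ) (hm : Squarefree m) (hu : ¬ IsUnit m) (q : ℚ) (h : q ^ 2 = m) : False := by
  obtain ⟨k, hk⟩ := sqf_int 1 squarefree_one q m (by simpa using h)
  rw [← hk] at h
  have h1 : k ^ 2 = m := by exact_mod_cast h
  have h2 : IsUnit k := hm k ⟨1, by rw [← h1]; ring⟩
  exact hu (h1 ▸ h2.pow 2)

lemma clTor_of_pid (K : Type) [Field K] [NumberField K] (h : IsPrincipalIdealRing (𝓞 K)) :
    clTor K 3 = 1 := by
  rw [← classNumber_eq_one_iff] at h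
  have h2 : Subsingleton (ClassGroup (𝓞 K)) := Fintype.card_le_one_iff_subsingleton.1 h.le
  unfold clTor
  have h3 : Unique {c : ClassGroup (𝓞 K) // c ^ 3 = 1} := ⟨⟨⟨1, one_pow 3⟩⟩, fun a => Subsingleton.elim _ _⟩
  exact Nat.card_unique

lemma xsq (d : ℕ) : (Complex.I * (Real.sqrt d : ℂ) : ℂ) ^ 2 = ((-d : ℤ) : ℂ) := by
  rw [mul_pow, Complex.I_sq, ← Complex.ofReal_pow, Real.sq_sqrt (by positivity)]
  push_cast; ring

lemma ysq (d : ℕ) : ((Real.sqrt (3 * d) : ℝ) : ℂ) ^ 2 = 3 * d := by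
  rw [← Complex.ofReal_pow, Real.sq_sqrt (by positivity)]
  push_cast; ring

lemma xnq (d : ℕ) (hd : 1 < d) (q : ℚ) : (q : ℂ) ≠ (Complex.I * (Real.sqrt d : ℂ) : ℂ) := by
  intro h
  have h1 := congrArg (fun t : ℂ => t ^ 2) h
  simp only [xsq] at h1
  have h2 : q ^ 2 = -(d : ℚ) := by exact_mod_cast h1
  have h3 : (0 : ℚ) < d := by exact_mod_cast (by omega : 0 < d)
  nlinarith [sq_nonneg q]

lemma xy_mul (d : ℕ) : (Complex.I * (Real.sqrt d : ℂ) : ℂ) * ((Real.sqrt (3 * d) : ℝ) : ℂ) =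
    ((d : ℚ) : ℂ) * (Complex.I * (Real.sqrt 3 : ℂ)) := by
  have h : Real.sqrt (3 * d) = Real.sqrt 3 * Real.sqrt d := Real.sqrt_mul (by norm_num) _
  have h2 : (Real.sqrt d : ℂ) * Real.sqrt d = d := by
    rw [← Complex.ofReal_mul, Real.mul_self_sqrt (by positivity)]; simp
  rw [h]
  push_cast
  linear_combination Complex.I * (Real.sqrt 3 : ℂ) * h2

lemma ssq : (Complex.I * (Real.sqrt 3 : ℂ) : ℂ) ^ 2 = -3 := by
  have := xsq 3
  push_cast at this
  exact this

lemma finrank_adj (x : ℂ) (n : ℤ) (hx : x ^ 2 = n) (hn : ∀ q : ℚ, (q : ℂ) ≠ x) :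
    Module.finrank ℚ (IntermediateField.adjoin ℚ {x}) = 2 :=
  (fr2 x (n : ℚ) (by rw [hx]; simp) hn).2

lemma main_case (d : ℕ) (hd : 1 < d) (hsq : Squarefree d) (δ : ℂ) (m : ℤ) (hm : Squarefree m)
    (hu : ¬ IsUnit m) (hδ : δ ^ 2 = m) (hmem : δ ∈ Qpos3 d) (t : ℚ) (ht : t ≠ 0)
    (hy : ((Real.sqrt (3 * d) : ℝ) : ℂ) = t * δ) :
    clTor (Qneg d) 3 ≤ 3 * clTor (Qpos3 d) 3 ∧ clTor (Qpos3 d) 3 ≤ 3 * clTor (Qneg d) 3 := by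
  set x := (Complex.I * (Real.sqrt d : ℂ) : ℂ) with hx
  set y := ((Real.sqrt (3 * d) : ℝ) : ℂ) with hy'
  have ht' : (t : ℂ) ≠ 0 := by exact_mod_cast ht
  have hδq : ∀ q : ℚ, (q : ℂ) ≠ δ := by
    intro q hq
    rw [← hq] at hδ
    exact not_sq m hm hu q (by exact_mod_cast hδ)
  have hyq : ∀ q : ℚ, (q : ℂ) ≠ y := by
    intro q hq
    apply hδq (q / t)
    push_cast
    rw [hq, hy]; field_simp
  have h1 : Module.finrank ℚ (Qneg d) = 2 := finrank_adj x _ (xsq d) (xnq d hd)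
  have h2 : Module.finrank ℚ (Qpos3 d) = 2 :=
    finrank_adj y (3 * d : ℤ) (by rw [ysq]; push_cast; rfl) hyq
  have hxm : x ∈ Qneg d := IntermediateField.mem_adjoin_simple_self ℚ x
  have hd0 : (d : ℚ) ≠ 0 := by exact_mod_cast (by omega : d ≠ 0)
  have hxδ : x * δ = ((d / t : ℚ) : ℂ) * (Complex.I * (Real.sqrt 3 : ℂ)) := by
    have := xy_mul d
    rw [← hx, ← hy', hy] at this
    push_cast
    push_cast at this
    field_simp
    linear_combination this
  have hsqd : Squarefree (-d : ℤ) := by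
    rw [← Int.squarefree_natAbs]; simpa using hsq
  constructor
  · exact half (Qpos3 d) (Qneg d) h2 h1 δ x hmem hxm m (-d) hδ (xsq d) hsqd hδq (xnq d hd) (d / t)
      (div_ne_zero hd0 ht) _ ssq (by rw [mul_comm]; exact hxδ)
  · exact half (Qneg d) (Qpos3 d) h1 h2 x δ hxm hmem (-d) m (xsq d) hδ hm (xnq d hd) hδq (d / t)
      (div_ne_zero hd0 ht) _ ssq hxδ

lemma neg3 : clTor (Qneg 3) 3 = 1 := by
  set s : ℂ := Complex.I * (Real.sqrt ((3 : ℕ) : ℝ) : ℂ) with hs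
  have hs2 : s ^ 2 = -3 := by rw [hs, xsq]; push_cast; rfl
  set ζ : ℂ := (s - 1) / 2 with hζ
  have hζ1 : ζ ^ 2 + ζ + 1 = 0 := by rw [hζ]; linear_combination (1 / 4 : ℂ) * hs2
  have hprim : IsPrimitiveRoot ζ 3 := by
    apply IsPrimitiveRoot.of_map_of_injective (f := RingHom.id ℂ) (hf := fun _ _ h => h)
    have h3 : ζ ^ 3 = 1 := by linear_combination (ζ - 1) * hζ1
    have hne : ζ ≠ 1 := by
      intro h; rw [h] at hζ1; norm_num at hζ1
    have := orderOf_eq_prime (p := 3) (hp := ⟨by norm_num⟩) h3 hne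
    rw [← this]
    exact IsPrimitiveRoot.orderOf ζ
  have heq : Qneg 3 = IntermediateField.adjoin ℚ {ζ} := by
    apply le_antisymm
    · refine IntermediateField.adjoin_simple_le_iff.2 ?_
      have h0 := IntermediateField.mem_adjoin_simple_self ℚ ζ
      have : Complex.I * (Real.sqrt ((3 : ℕ) : ℝ) : ℂ) = ζ + ζ + 1 := by rw [← hs, hζ]; ring
      rw [this]
      exact add_mem (add_mem h0 h0) (one_mem _)
    · refine IntermediateField.adjoin_simple_le_iff.2 ?_
      have h0 : s ∈ Qneg 3 := IntermediateField.mem_adjoin_simple_self ℚ s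
      exact div_mem (sub_mem h0 (one_mem _)) (ofNat_mem _ 2)
  rw [heq]
  have hcyc : IsCyclotomicExtension {3} ℚ (IntermediateField.adjoin ℚ {ζ}) :=
by
    change IsCyclotomicExtension {3} ℚ (IntermediateField.adjoin ℚ {ζ}).toSubalgebra
    rw [IntermediateField.adjoin_simple_toSubalgebra_of_isAlgebraic
      ((hprim.isIntegral (by norm_num)).tower_top (A := ℚ)).isAlgebraic]
    exact hprim.adjoin_isCyclotomicExtension ℚ
  have : NumberField (IntermediateField.adjoin ℚ {ζ}) := IsCyclotomicExtension.numberField {3} ℚ _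
  exact clTor_of_pid _ (IsCyclotomicExtension.Rat.three_pid _)

lemma pos3 : clTor (Qpos3 3) 3 = 1 := by
  have h9 : Real.sqrt (3 * (3 : ℕ)) = 3 := by
    rw [show (3 * ((3 : ℕ) : ℝ)) = 3 ^ 2 by norm_num]
    exact Real.sqrt_sq (by norm_num)
  have hbot : Qpos3 3 = ⊥ := by
    unfold Qpos3
    rw [h9, IntermediateField.adjoin_simple_eq_bot_iff]
    exact ofNat_mem _ 3
  rw [hbot]
  have : NumberField (⊥ : IntermediateField ℚ ℂ) := ⟨⟩
  apply clTor_of_pid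
  apply IsPrincipalIdealRing.of_surjective (algebraMap ℤ (𝓞 (⊥ : IntermediateField ℚ ℂ)))
  intro α
  obtain ⟨q, hq⟩ := IntermediateField.mem_bot.1 (α : (⊥ : IntermediateField ℚ ℂ)).2
  have hq' : algebraMap ℚ (⊥ : IntermediateField ℚ ℂ) q = α := Subtype.ext hq
  have hi : IsIntegral ℤ q := by
    have h : IsIntegral ℤ (algebraMap ℚ (⊥ : IntermediateField ℚ ℂ) q) := by
      rw [hq']; exact α.2
    exact (isIntegral_algebraMap_iff (algebraMap ℚ (⊥ : IntermediateField ℚ ℂ)).injective).1 h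
  obtain ⟨k, hk⟩ := IsIntegrallyClosed.isIntegral_iff.1 hi
  refine ⟨k, ?_⟩
  apply RingOfIntegers.ext
  rw [← hq', ← hk]
  simp

end Final
end Scholz

/-- **Scholz reflection principle.** For every squarefree integer `d > 1`,
`|Cl_{ℚ(√-d)}[3]| ≤ 3 · |Cl_{ℚ(√3d)}[3]|` and `|Cl_{ℚ(√3d)}[3]| ≤ 3 · |Cl_{ℚ(√-d)}[3]|`. -/
theorem scholz_reflection (d : ℕ) (hd : 1 < d) (hsq : Squarefree d) :
    clTor (Qneg d) 3 ≤ 3 * clTor (Qpos3 d) 3 ∧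
      clTor (Qpos3 d) 3 ≤ 3 * clTor (Qneg d) 3 := by
  have hymem : ((Real.sqrt (3 * d) : ℝ) : ℂ) ∈ Qpos3 d := IntermediateField.mem_adjoin_simple_self ℚ _
  by_cases h3 : 3 ∣ d
  · obtain ⟨e, rfl⟩ := h3
    by_cases he : e = 1
    · subst he
      have h1 : clTor (Qneg (3 * 1)) 3 = 1 := Scholz.neg3
      have h2 : clTor (Qpos3 (3 * 1)) 3 = 1 := Scholz.pos3
      rw [h1, h2]
      norm_num
    · refine Scholz.main_case (3 * e) hd hsq (((Real.sqrt (3 * (3 * e : ℕ)) : ℝ) : ℂ) / 3) e ?_ ?_ ?_ ?_ 3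
        (by norm_num) ?_
      · rw [← Int.squarefree_natAbs]
        exact hsq.squarefree_of_dvd (Dvd.intro_left 3 rfl)
      · intro h
        rcases Int.isUnit_iff.1 h with h | h <;> omega
      · rw [div_pow, Scholz.ysq]; push_cast; ring
      · exact div_mem hymem (ofNat_mem _ 3)
      · push_cast; ring
  · refine Scholz.main_case d hd hsq ((Real.sqrt (3 * d) : ℝ) : ℂ) (3 * d) ?_ ?_ ?_ hymem 1
        (by norm_num) ?_
    · rw [← Int.squarefree_natAbs]
      have : (3 * (d : ℤ)).natAbs = 3 * d := by omega
      rw [this, Nat.squarefree_mul ((Nat.Prime.coprime_iff_not_dvd Nat.prime_three).2 h3)]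
      exact ⟨Nat.prime_three.prime.squarefree, hsq⟩
    · intro h
      rcases Int.isUnit_iff.1 h with h | h <;> omega
    · rw [Scholz.ysq]; push_cast; ring
    · push_cast; ring
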